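/- arXiv:2406.06354 — 3 statements merged into one kernel-verified Lean document; each statement's English description precedes it below -/
import Mathlib

section
/- Fix integers d ≥ 1 and p ≥ 1, and let σ satisfy Assumption A. Let f ∈ Π_p(ℝ^d) be a target function and let U ⊊ ℝ^d be a set whose complement U^c = ℝ^d ∖ U is nonempty. Let p* be the minimum of deg g over all g ∈ Π_p(ℝ^d) such that g(x) = f(x) for all x ∈ U^c (this set contains f, so p* is well defined). For ε > 0 and N ≥ 1, in the small features regime with parameter ε, consider the random affine set A = {a ∈ ℝ^N : f_RF(a; x) = f(x) for all x ∈ U^c}; on the event that A is nonempty, let a* denote its unique element of minimal Euclidean norm. Then: (i) for every ε > 0 and every η > 0 there exists N₀ such that for all N ≥ N₀, P(A ≠ ∅) ≥ 1 − η; and (ii) for all δ > 0 and η > 0 there exists ε₀ > 0 such that for every ε ∈ (0, ε₀) there exists N₀ such that for all N ≥ N₀, with probability at least 1 − η, A ≠ ∅ and the L²(γ_d)-distance from the polynomial x ↦ f_RF(a*; x) to the subspace Π_{p*}(ℝ^d) is at most δ. -/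
open MeasureTheory ProbabilityTheory

/-- The standard Gaussian measure `N(0, I_d)` on `ℝ^d`. -/
noncomputable def gaussD (d : ℕ) : Measure (Fin d → ℝ) :=
  Measure.pi fun _ => gaussianReal 0 1

/-- The law of a feature pair `(w, b)` with `w ∼ N(0, v I_d)` and `b ∼ N(0, v)` independent. -/
noncomputable def featMeas (d : ℕ) (v : NNReal) : Measure ((Fin d → ℝ) × ℝ) :=
  (Measure.pi fun _ : Fin d => gaussianReal 0 v).prod (gaussianReal 0 v)

/-- The random features model `f_RF(a; x) = N^{-1/2} Σᵢ aᵢ σ(⟨wᵢ,x⟩ + bᵢ)`,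
where `ω i = (wᵢ, bᵢ)`. -/
noncomputable def fRF (d N : ℕ) (σ : ℝ → ℝ) (ω : Fin N → (Fin d → ℝ) × ℝ)
    (a : Fin N → ℝ) (x : Fin d → ℝ) : ℝ :=
  (1 / Real.sqrt N) * ∑ i, a i * σ (∑ j, (ω i).1 j * x j + (ω i).2)

/-- The affine set `A = {a : f_RF(a; x) = f(x) for all x ∈ Uᶜ}` of interpolating
parameters. -/
def interpSet (d N : ℕ) (σ : ℝ → ℝ) (U : Set (Fin d → ℝ))
    (F : MvPolynomial (Fin d) ℝ) (ω : Fin N → (Fin d → ℝ) × ℝ) : Set (Fin N → ℝ) :=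
  {a | ∀ x ∈ Uᶜ, fRF d N σ ω a x = MvPolynomial.eval x F}

/-- `p*`: the minimal total degree of a polynomial of degree at most `p` interpolating
the target `F` on `Uᶜ`. -/
noncomputable def minInterpDeg (d p : ℕ) (U : Set (Fin d → ℝ))
    (F : MvPolynomial (Fin d) ℝ) : ℕ :=
  sInf {k : ℕ | ∃ G : MvPolynomial (Fin d) ℝ, G.totalDegree ≤ p ∧
    (∀ x ∈ Uᶜ, MvPolynomial.eval x G = MvPolynomial.eval x F) ∧ G.totalDegree = k}

/-!
Rescale the features to `√ε • (w, b)` with `(w, b)` standard Gaussian. The coefficient of `x ^ β` in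
`f_RF(a; x)` becomes `√ε ^ |β| * (D a) β`, where `D` is an explicit design matrix. By the law of
large numbers `D Dᵀ` approaches a moment matrix which depends continuously on `√ε` and is positive
definite, even at `ε = 0`, because every coefficient of `σ` is nonzero. So with high probability
`D` is surjective, and conditioned independently of small `ε`. Interpolating by a fixed polynomial
of degree `p*` then costs `‖a‖ = O(√ε ^ (-p*))`. The minimal-norm interpolant costs no more, and
each of its coefficients of degree greater than `p*` carries a factor `√ε ^ (p* + 1)`, so these are
`O(√ε)`.
-/

open Filter Matrix Topology

section Conditioning

variable {ι n : Type*} [Fintype ι] [Fintype n] {κ : ℝ}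

/-- The quadratic form of `A` lies between `κ⁻¹` and `κ` times the standard one. The lower bound is
written without the inverse, and `A` is not required to be symmetric, so that for suitable `κ` the
condition holds on a neighbourhood of any positive definite matrix. -/
def IsConditioned (κ : ℝ) (A : Matrix ι ι ℝ) : Prop :=
  ∀ u : ι → ℝ, u ⬝ᵥ u ≤ κ * (u ⬝ᵥ A *ᵥ u) ∧ u ⬝ᵥ A *ᵥ u ≤ κ * (u ⬝ᵥ u)

lemma dotProduct_sq_le (u v : n → ℝ) : (u ⬝ᵥ v) ^ 2 ≤ (u ⬝ᵥ u) * (v ⬝ᵥ v) := by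
  simpa only [dotProduct, ← sq] using Finset.sum_mul_sq_le_sq_mul_sq Finset.univ u v

lemma dotProduct_mul_transpose_mulVec (T : Matrix ι n ℝ) (u : ι → ℝ) :
    u ⬝ᵥ (T * Tᵀ) *ᵥ u = (Tᵀ *ᵥ u) ⬝ᵥ (Tᵀ *ᵥ u) := by
  rw [← mulVec_mulVec, dotProduct_mulVec, ← mulVec_transpose]

lemma le_mul_of_sq_le_mul_mul {x y : ℝ} (hx : 0 ≤ x) (hκ : 0 ≤ κ) (hy : 0 ≤ y)
    (h : x ^ 2 ≤ κ * x * y) : x ≤ κ * y := by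
  rcases hx.eq_or_lt with rfl | hx
  · positivity
  · exact le_of_mul_le_mul_left (by linarith) hx

lemma dotProduct_self_nonneg (u : n → ℝ) : 0 ≤ u ⬝ᵥ u :=
  dotProduct_self_star_nonneg u

lemma IsConditioned.exists_mulVec_eq {T : Matrix ι n ℝ} (hκ : 0 ≤ κ)
    (hT : IsConditioned κ (T * Tᵀ)) (g : ι → ℝ) :
    ∃ a, T *ᵥ a = g ∧ a ⬝ᵥ a ≤ κ * (g ⬝ᵥ g) := by
  have hinj : Function.Injective (T * Tᵀ).mulVecLin := by
    rw [← LinearMap.ker_eq_bot, LinearMap.ker_eq_bot']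
    intro u (hu : (T * Tᵀ) *ᵥ u = 0)
    have huu : u ⬝ᵥ u ≤ 0 := by simpa [hu] using (hT u).1
    exact dotProduct_self_eq_zero.1 (huu.antisymm (dotProduct_self_nonneg u))
  obtain ⟨u, hu : (T * Tᵀ) *ᵥ u = g⟩ := LinearMap.injective_iff_surjective.1 hinj g
  have hquad : u ⬝ᵥ g = (Tᵀ *ᵥ u) ⬝ᵥ (Tᵀ *ᵥ u) := by
    rw [← hu, dotProduct_mul_transpose_mulVec]
  refine ⟨Tᵀ *ᵥ u, by rw [mulVec_mulVec, hu], ?_⟩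
  rw [← hquad]
  refine le_mul_of_sq_le_mul_mul (hquad ▸ dotProduct_self_nonneg _) hκ (dotProduct_self_nonneg g) ?_
  calc (u ⬝ᵥ g) ^ 2 ≤ (u ⬝ᵥ u) * (g ⬝ᵥ g) := dotProduct_sq_le u g
    _ ≤ κ * (u ⬝ᵥ g) * (g ⬝ᵥ g) := by
      gcongr
      · exact dotProduct_self_nonneg g
      · simpa only [hu] using (hT u).1

lemma IsConditioned.mulVec_dotProduct_self_le {T : Matrix ι n ℝ} (hκ : 0 ≤ κ)
    (hT : IsConditioned κ (T * Tᵀ)) (a : n → ℝ) :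
    (T *ᵥ a) ⬝ᵥ (T *ᵥ a) ≤ κ * (a ⬝ᵥ a) := by
  refine le_mul_of_sq_le_mul_mul (dotProduct_self_nonneg _) hκ (dotProduct_self_nonneg a) ?_
  set y := T *ᵥ a with hy
  calc (y ⬝ᵥ y) ^ 2 = ((Tᵀ *ᵥ y) ⬝ᵥ a) ^ 2 := by
        conv_lhs => rw [hy, dotProduct_mulVec, ← hy, ← mulVec_transpose]
    _ ≤ ((Tᵀ *ᵥ y) ⬝ᵥ (Tᵀ *ᵥ y)) * (a ⬝ᵥ a) := dotProduct_sq_le _ a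
    _ = (y ⬝ᵥ (T * Tᵀ) *ᵥ y) * (a ⬝ᵥ a) := by rw [dotProduct_mul_transpose_mulVec]
    _ ≤ κ * (y ⬝ᵥ y) * (a ⬝ᵥ a) := by
      gcongr
      · exact dotProduct_self_nonneg a
      · exact (hT y).2

lemma isConditioned_of_forall_sphere {A : Matrix ι ι ℝ}
    (h : ∀ u ∈ {u : ι → ℝ | u ⬝ᵥ u = 1}, 1 ≤ κ * (u ⬝ᵥ A *ᵥ u) ∧ u ⬝ᵥ A *ᵥ u ≤ κ) :
    IsConditioned κ A := by
  intro u
  rcases (dotProduct_self_nonneg u).eq_or_lt with hu | hu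
  · simp [dotProduct_self_eq_zero.1 hu.symm]
  obtain ⟨c, hc, hcu⟩ : ∃ c : ℝ, 0 < c ∧ u ⬝ᵥ u = c ^ 2 :=
    ⟨√(u ⬝ᵥ u), Real.sqrt_pos.2 hu, (Real.sq_sqrt hu.le).symm⟩
  have hsphere : (c⁻¹ • u) ⬝ᵥ (c⁻¹ • u) = 1 := by
    simp only [smul_dotProduct, dotProduct_smul, smul_eq_mul, hcu]
    field_simp
  have hquad : (c⁻¹ • u) ⬝ᵥ A *ᵥ (c⁻¹ • u) = (u ⬝ᵥ A *ᵥ u) / c ^ 2 := by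
    simp only [smul_dotProduct, mulVec_smul, dotProduct_smul, smul_eq_mul]
    field_simp
  have hc2 : 0 < c ^ 2 := by positivity
  have hbounds := h _ hsphere
  rw [hquad, mul_div_assoc', le_div_iff₀ hc2, div_le_iff₀ hc2, one_mul] at hbounds
  rwa [hcu]

lemma isCompact_setOf_dotProduct_self_eq_one : IsCompact {u : ι → ℝ | u ⬝ᵥ u = 1} := by
  refine Metric.isCompact_of_isClosed_isBounded
    (isClosed_eq (by fun_prop) continuous_const) (Metric.isBounded_iff_subset_closedBall 0 |>.2
      ⟨1, fun u (hu : u ⬝ᵥ u = 1) => ?_⟩)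
  rw [mem_closedBall_zero_iff, pi_norm_le_iff_of_nonneg zero_le_one]
  intro i
  rw [Real.norm_eq_abs, ← sq_le_one_iff_abs_le_one, sq, ← hu]
  exact Finset.single_le_sum (f := fun i => u i * u i) (fun i _ => mul_self_nonneg _)
    (Finset.mem_univ i)

lemma exists_eventually_isConditioned {M : Matrix ι ι ℝ} (hM : M.PosDef) :
    ∃ κ > 0, ∀ᶠ A in 𝓝 M, IsConditioned κ A := by
  set S := {u : ι → ℝ | u ⬝ᵥ u = 1}
  have hS : IsCompact S := isCompact_setOf_dotProduct_self_eq_one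
  have hcont : Continuous fun u : ι → ℝ => u ⬝ᵥ M *ᵥ u := by fun_prop
  obtain ⟨l, hl, hlow⟩ := hS.exists_forall_le' hcont.continuousOn (a := 0) fun u hu => by
    refine hM.dotProduct_mulVec_pos (x := u) ?_
    rintro rfl
    simp [S] at hu
  obtain ⟨L, hL, hup⟩ := (hS.bddAbove_image hcont.continuousOn).exists_ge l⁻¹
  have hL0 : 0 < L := (inv_pos.2 hl).trans_le hL
  refine ⟨2 * L, by positivity, ?_⟩
  have hopen : ∀ᶠ A in 𝓝 M, ∀ u ∈ S, 1 < 2 * L * (u ⬝ᵥ A *ᵥ u) ∧ u ⬝ᵥ A *ᵥ u < 2 * L := by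
    refine hS.eventually_forall_of_forall_eventually fun u hu => ?_
    have hquad : Continuous fun z : Matrix ι ι ℝ × (ι → ℝ) => z.2 ⬝ᵥ z.1 *ᵥ z.2 := by fun_prop
    have hMu : 1 ≤ L * (u ⬝ᵥ M *ᵥ u) := by
      calc 1 = l⁻¹ * l := (inv_mul_cancel₀ hl.ne').symm
        _ ≤ L * (u ⬝ᵥ M *ᵥ u) := mul_le_mul hL (hlow u hu) hl.le hL0.le
    have hMu' : u ⬝ᵥ M *ᵥ u ≤ L := hup _ ⟨u, hu, rfl⟩
    exact (continuous_const.mul hquad).continuousAt.eventually_const_lt (by dsimp; linarith) |>.and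
      (hquad.continuousAt.eventually_lt_const (by dsimp; linarith))
  exact hopen.mono fun A hA => isConditioned_of_forall_sphere fun u hu =>
    ⟨(hA u hu).1.le, (hA u hu).2.le⟩

end Conditioning

section MinimalNorm
variable {E : Type*} [NormedAddCommGroup E] [NormedSpace ℝ E] [StrictConvexSpace ℝ E]
  [ProperSpace E]

lemma exists_unique_norm_le {K : Set E} (hconv : Convex ℝ K) (hclosed : IsClosed K)
    (hne : K.Nonempty) :
    ∃ v ∈ K, (∀ w ∈ K, ‖v‖ ≤ ‖w‖) ∧ ∀ w ∈ K, (∀ w' ∈ K, ‖w‖ ≤ ‖w'‖) → w = v := by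
  obtain ⟨v, hv, hdist⟩ := hclosed.exists_infDist_eq_dist hne 0
  have hmin : ∀ w ∈ K, ‖v‖ ≤ ‖w‖ := fun w hw => by
    simpa only [dist_zero_left, hdist] using Metric.infDist_le_dist_of_mem (x := (0 : E)) hw
  refine ⟨v, hv, hmin, fun w hw hw' => by_contra fun hwv => ?_⟩
  have hlt : ‖(1 / 2 : ℝ) • (w + v)‖ < ‖w‖ :=
    (norm_midpoint_lt_iff ((hw' v hv).antisymm (hmin w hw))).2 hwv
  refine (hw' _ ?_).not_gt hlt
  rw [smul_add]
  exact hconv hw hv (by norm_num) (by norm_num) (by norm_num)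

end MinimalNorm

section LawOfLargeNumbers
variable {Ω : Type*} [MeasurableSpace Ω]

lemma tendsto_measure_one_of_ae_eventually_mem {μ : Measure Ω} [IsProbabilityMeasure μ]
    {S : ℕ → Set Ω} (hS : ∀ᵐ ω ∂μ, ∀ᶠ n in atTop, ω ∈ S n) :
    Tendsto (fun n => μ (S n)) atTop (𝓝 1) := by
  set T : ℕ → Set Ω := fun m => {ω | ∀ n ≥ m, ω ∈ S n}
  have hT : Monotone T := fun _ _ hmn _ hω k hk => hω k (hmn.trans hk)
  have hunion : μ (⋃ m, T m) = 1 := by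
    refine (measure_congr (eventuallyEq_univ.2 ?_)).trans measure_univ
    filter_upwards [hS] with ω hω
    exact Set.mem_iUnion.2 (eventually_atTop.1 hω)
  exact tendsto_of_tendsto_of_tendsto_of_le_of_le (hunion ▸ tendsto_measure_iUnion_atTop hT)
    tendsto_const_nhds (fun m => measure_mono fun _ (hω : _ ∈ T m) => hω m le_rfl)
    (fun _ => prob_le_one)

lemma map_infinitePi_restrict_fin (ν : Measure Ω) [IsProbabilityMeasure ν] (N : ℕ) :
    (Measure.infinitePi fun _ : ℕ => ν).map (fun ω (i : Fin N) => ω i) =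
      Measure.pi fun _ : Fin N => ν := by
  rw [Measure.map_infinitePi_infinitePi_of_inj Fin.val_injective, Measure.infinitePi_eq_pi]

variable {E : Type*} [NormedAddCommGroup E] [NormedSpace ℝ E] [CompleteSpace E]
  [MeasurableSpace E] [BorelSpace E]

lemma tendsto_pi_measure_mean_mem {ν : Measure Ω} [IsProbabilityMeasure ν] {X : Ω → E}
    (hX : Measurable X) (hint : Integrable X ν) {V : Set E} (hV : V ∈ 𝓝 (∫ x, X x ∂ν)) :
    Tendsto (fun N : ℕ => (Measure.pi fun _ : Fin N => ν)
      {ω | (N : ℝ)⁻¹ • ∑ i, X (ω i) ∈ V}) atTop (𝓝 1) := by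
  set P := Measure.infinitePi fun _ : ℕ => ν
  have heval (i : ℕ) : MeasurePreserving (Function.eval i) P ν :=
    measurePreserving_eval_infinitePi _ i
  have hindep : iIndepFun (fun (i : ℕ) ω => X (ω i)) P := iIndepFun_infinitePi fun _ => hX
  have hident (i : ℕ) : IdentDistrib (fun ω => X (ω i)) X P ν :=
    IdentDistrib.comp (u := X) (g := id) ⟨(heval i).aemeasurable, aemeasurable_id,
      (heval i).map_eq.trans Measure.map_id.symm⟩ hX
  have hlaw : ∀ᵐ ω ∂P, Tendsto (fun n : ℕ => (n : ℝ)⁻¹ • ∑ i ∈ Finset.range n, X (ω i)) atTop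
      (𝓝 (∫ x, X x ∂ν)) := by
    rw [← (hident 0).integral_eq]
    exact strong_law_ae _ ((hident 0).integrable_iff.2 hint)
      (fun _ _ hij => hindep.indepFun hij) fun i => (hident i).trans (hident 0).symm
  refine tendsto_of_tendsto_of_tendsto_of_le_of_le
    (tendsto_measure_one_of_ae_eventually_mem (hlaw.mono fun ω hω => hω.eventually_mem hV))
    tendsto_const_nhds (fun N => ?_) (fun _ => prob_le_one)
  rw [← map_infinitePi_restrict_fin]
  have hrestrict : Measurable fun (ω : ℕ → Ω) (i : Fin N) => ω i :=
    measurable_pi_lambda _ fun _ => measurable_pi_apply _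
  refine le_trans (measure_mono fun ω hω => ?_) (Measure.le_map_apply hrestrict.aemeasurable _)
  change _ • ∑ i : Fin N, X (ω i) ∈ V
  rwa [Fin.sum_univ_eq_sum_range fun i => X (ω i)]

end LawOfLargeNumbers

section GramMatrix
variable {Ω ι : Type*}

/-- The feature vectors `φ (ω k)` of a sample `ω` of size `N`, as columns, with the normalization
`N ^ (-1 / 2)` of the random features model. -/
noncomputable def designMatrix {N : ℕ} (φ : Ω → ι → ℝ) (ω : Fin N → Ω) :
    Matrix ι (Fin N) ℝ :=
  of fun i k => φ (ω k) i / √N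

/-- The matrix of second moments of the family `φ` with respect to the empirical measure of the
sample `ω`. -/
noncomputable def empiricalMomentMatrix {N : ℕ} (φ : Ω → ι → ℝ) (ω : Fin N → Ω) : Matrix ι ι ℝ :=
  (N : ℝ)⁻¹ • ∑ k, of fun i j => φ (ω k) i * φ (ω k) j

lemma designMatrix_mul_transpose {N : ℕ} (φ : Ω → ι → ℝ) (ω : Fin N → Ω) :
    designMatrix φ ω * (designMatrix φ ω)ᵀ = empiricalMomentMatrix φ ω := by
  ext i j
  simp only [designMatrix, empiricalMomentMatrix, mul_apply, transpose_apply, of_apply,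
    Matrix.smul_apply, Matrix.sum_apply, smul_eq_mul, Finset.mul_sum, div_mul_div_comm,
    Real.mul_self_sqrt (Nat.cast_nonneg N)]
  exact Finset.sum_congr rfl fun k _ => div_eq_inv_mul _ _

variable [MeasurableSpace Ω]

/-- The matrix of second moments of the family `φ`, that is, its Gram matrix in `L²(μ)`. Entries
whose integrand is not integrable are `0`. -/
noncomputable def momentMatrix (μ : Measure Ω) (φ : Ω → ι → ℝ) : Matrix ι ι ℝ :=
  of fun i j => ∫ x, φ x i * φ x j ∂μ

lemma tendsto_pi_measure_empiricalMomentMatrix [Finite ι] {ν : Measure Ω}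
    [IsProbabilityMeasure ν] {φ : Ω → ι → ℝ} (hφ : Measurable φ)
    (hint : ∀ i j, Integrable (fun x => φ x i * φ x j) ν) {p : Matrix ι ι ℝ → Prop}
    (hp : ∀ᶠ A in 𝓝 (momentMatrix ν φ), p A) :
    Tendsto (fun N : ℕ => (Measure.pi fun _ : Fin N => ν)
      {ω | p (empiricalMomentMatrix φ ω)}) atTop (𝓝 1) := by
  have := Fintype.ofFinite ι
  let X : Ω → ι → ι → ℝ := fun x i j => φ x i * φ x j
  have hX : Integrable X ν := Integrable.of_eval fun i => Integrable.of_eval (hint i)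
  have hmean : ∫ x, X x ∂ν = momentMatrix ν φ := by
    ext i j
    rw [eval_integral fun i => Integrable.of_eval (hint i), eval_integral (hint i)]
    rfl
  have hV : {A | p A} ∈ 𝓝 (∫ x, X x ∂ν) := by rw [hmean]; exact hp
  exact tendsto_pi_measure_mean_mem (by fun_prop) hX hV

variable [Fintype ι] {μ : Measure Ω} {φ : Ω → ι → ℝ}

lemma dotProduct_momentMatrix_mulVec (hint : ∀ i j, Integrable (fun x => φ x i * φ x j) μ)
    (u : ι → ℝ) : u ⬝ᵥ momentMatrix μ φ *ᵥ u = ∫ x, (u ⬝ᵥ φ x) ^ 2 ∂μ := by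
  have hsq (x : Ω) : (u ⬝ᵥ φ x) ^ 2 = ∑ i, ∑ j, u i * u j * (φ x i * φ x j) := by
    rw [sq, dotProduct, Finset.sum_mul_sum]
    exact Finset.sum_congr rfl fun i _ => Finset.sum_congr rfl fun j _ => by ring
  simp_rw [hsq]
  rw [integral_finsetSum _ fun i _ => integrable_finsetSum _ fun j _ => (hint i j).const_mul _]
  simp_rw [integral_finsetSum _ fun j _ => (hint _ j).const_mul _, integral_const_mul, dotProduct,
    mulVec, dotProduct, momentMatrix, of_apply, Finset.mul_sum]
  exact Finset.sum_congr rfl fun i _ => Finset.sum_congr rfl fun j _ => by ring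

variable [TopologicalSpace Ω] [μ.IsOpenPosMeasure]

lemma integral_sq_pos_of_continuous {f : Ω → ℝ} (hf : Continuous f)
    (hint : Integrable (fun x => f x ^ 2) μ) (hne : f ≠ 0) : 0 < ∫ x, f x ^ 2 ∂μ := by
  refine (integral_nonneg fun x => sq_nonneg (f x)).lt_of_ne' fun hzero => hne ?_
  have hae := (integral_eq_zero_iff_of_nonneg (fun x => sq_nonneg (f x)) hint).1 hzero
  have hsq := (Continuous.ae_eq_iff_eq μ (hf.pow 2) continuous_zero).1 hae
  exact funext fun x => pow_eq_zero_iff two_ne_zero |>.1 (congrFun hsq x)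

lemma momentMatrix_posDef (hφ : Continuous φ)
    (hint : ∀ i j, Integrable (fun x => φ x i * φ x j) μ)
    (hindep : ∀ u : ι → ℝ, (∀ x, u ⬝ᵥ φ x = 0) → u = 0) :
    (momentMatrix μ φ).PosDef := by
  refine posDef_iff_dotProduct_mulVec.2 ⟨?_, fun u hu => ?_⟩
  · ext i j
    simp [momentMatrix, mul_comm]
  · rw [star_trivial, dotProduct_momentMatrix_mulVec hint]
    refine integral_sq_pos_of_continuous (by fun_prop) ?_ fun h => hu (hindep u (congrFun h))
    simp only [sq, dotProduct, Finset.sum_mul_sum]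
    refine integrable_finsetSum _ fun i _ => integrable_finsetSum _ fun j _ => ?_
    simpa only [mul_mul_mul_comm] using (hint i j).const_mul (u i * u j)

end GramMatrix

section Monomials

/-- The exponents of the monomials of total degree at most `p`. -/
noncomputable def multiIndices (τ : Type*) [Finite τ] (p : ℕ) : Finset (τ →₀ ℕ) :=
  (Finsupp.finite_of_degree_le p).toFinset

lemma mem_multiIndices {τ : Type*} [Finite τ] {p : ℕ} {β : τ →₀ ℕ} :
    β ∈ multiIndices τ p ↔ β.degree ≤ p := by
  simp [multiIndices]

variable {τ : Type*} [Fintype τ] {p : ℕ}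

/-- The values at `x` of all monomials of total degree at most `p`. -/
noncomputable def monomialVec (p : ℕ) (x : τ → ℝ) (β : multiIndices τ p) : ℝ :=
  ∏ j, x j ^ β.1 j

/-- The coefficients of `Q` up to degree `p`, indexed like `monomialVec`. -/
noncomputable def coeffVec (p : ℕ) (Q : MvPolynomial τ ℝ) (β : multiIndices τ p) : ℝ :=
  Q.coeff β

lemma coeffVec_dotProduct_monomialVec {Q : MvPolynomial τ ℝ} (hQ : Q.totalDegree ≤ p)
    (x : τ → ℝ) : coeffVec p Q ⬝ᵥ monomialVec p x = Q.eval x := by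
  rw [MvPolynomial.eval_eq']
  refine (Finset.sum_coe_sort _ fun β => Q.coeff β * ∏ j, x j ^ β j).trans
    (Finset.sum_subset (fun β hβ => ?_) fun β _ hβ => ?_).symm
  · exact mem_multiIndices.2 ((MvPolynomial.le_totalDegree hβ).trans hQ)
  · rw [MvPolynomial.notMem_support_iff.1 hβ, zero_mul]

lemma ext_of_coeffVec_eq {Q R : MvPolynomial τ ℝ} (hQ : Q.totalDegree ≤ p)
    (hR : R.totalDegree ≤ p) (h : coeffVec p Q = coeffVec p R) : Q = R :=
  MvPolynomial.funext fun x => by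
    rw [← coeffVec_dotProduct_monomialVec hQ, h, coeffVec_dotProduct_monomialVec hR]

lemma eq_zero_of_forall_dotProduct_monomialVec {u : multiIndices τ p → ℝ}
    (hu : ∀ x, u ⬝ᵥ monomialVec p x = 0) : u = 0 := by
  classical
  let Q : MvPolynomial τ ℝ := ∑ β, MvPolynomial.monomial β.1 (u β)
  have hQ : Q = 0 := MvPolynomial.funext fun x => by
    simpa only [Q, map_sum, MvPolynomial.eval_monomial, map_zero, Finsupp.prod_pow, dotProduct,
      monomialVec] using hu x
  ext β
  have hcoeff : Q.coeff β = u β := by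
    simp only [Q, MvPolynomial.coeff_sum, MvPolynomial.coeff_monomial, Subtype.coe_inj,
      Finset.sum_ite_eq', Finset.mem_univ, if_true]
  rw [← hcoeff, hQ, MvPolynomial.coeff_zero, Pi.zero_apply]

lemma continuous_monomialVec : Continuous (monomialVec (τ := τ) p) := by
  unfold monomialVec
  fun_prop

end Monomials

section RidgePolynomials
variable {τ : Type*} [Fintype τ] {p : ℕ} (P : Polynomial ℝ)

/-- The polynomial `x ↦ P (⟨w, x⟩ + b)`, obtained from the Taylor expansion of `P` at `b`. -/
noncomputable def ridgePolynomial (z : (τ → ℝ) × ℝ) : MvPolynomial τ ℝ :=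
  Polynomial.aeval (∑ j, z.1 j • MvPolynomial.X j) (P.taylor z.2)

lemma eval_ridgePolynomial (z : (τ → ℝ) × ℝ) (x : τ → ℝ) :
    (ridgePolynomial P z).eval x = P.eval (∑ j, z.1 j * x j + z.2) := by
  rw [ridgePolynomial, ← MvPolynomial.coe_aeval_eq_eval, RingHom.coe_coe,
    ← Polynomial.aeval_algHom_apply, Polynomial.coe_aeval_eq_eval, Polynomial.taylor_eval]
  simp

lemma coeff_ridgePolynomial (z : (τ → ℝ) × ℝ) (β : τ →₀ ℕ) :
    (ridgePolynomial P z).coeff β =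
      (P.hasseDeriv β.degree).eval z.2 * (β.multinomial * ∏ j, z.1 j ^ β j) := by
  have hdeg : β.sum (fun _ m => m) = β.degree := rfl
  rw [ridgePolynomial, Polynomial.aeval_eq_sum_range, MvPolynomial.coeff_sum,
    ← Polynomial.taylor_coeff, ← Finsupp.prod_pow]
  simp only [MvPolynomial.coeff_smul, MvPolynomial.coeff_linearCombination_X_pow_of_fintype,
    smul_eq_mul, mul_ite, mul_zero, hdeg, Finset.sum_ite_eq, Finset.mem_range, Nat.lt_succ_iff]
  refine ite_eq_left_iff.2 fun h => ?_
  rw [Polynomial.coeff_eq_zero_of_natDegree_lt (not_le.1 h), zero_mul]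

lemma totalDegree_ridgePolynomial_le (z : (τ → ℝ) × ℝ) :
    (ridgePolynomial P z).totalDegree ≤ P.natDegree := by
  refine Finset.sup_le fun β hβ => not_lt.1 fun (hdeg : P.natDegree < β.degree) =>
    MvPolynomial.mem_support_iff.1 hβ ?_
  rw [coeff_ridgePolynomial, Polynomial.hasseDeriv_eq_zero_of_lt_natDegree _ _ hdeg,
    Polynomial.eval_zero, zero_mul]

/-- The coefficients, up to degree `p`, of the ridge polynomial with parameters `s • z`, after
division by `s ^ |β|`. Written without that division, they make sense also at `s = 0`, the limit of
vanishing features. -/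
noncomputable def featureMap (p : ℕ) (P : Polynomial ℝ) (s : ℝ) (z : (τ → ℝ) × ℝ)
    (β : multiIndices τ p) : ℝ :=
  β.1.multinomial * monomialVec p z.1 β * (P.hasseDeriv β.1.degree).eval (s * z.2)

lemma coeffVec_ridgePolynomial_smul (s : ℝ) (z : (τ → ℝ) × ℝ) (β : multiIndices τ p) :
    coeffVec p (ridgePolynomial P (s • z)) β = s ^ β.1.degree * featureMap p P s z β := by
  rw [coeffVec, coeff_ridgePolynomial, featureMap, monomialVec, Finsupp.degree_eq_sum,
    ← Finset.prod_pow_eq_pow_sum]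
  simp only [Prod.smul_fst, Prod.smul_snd, Pi.smul_apply, smul_eq_mul, mul_pow,
    Finset.prod_mul_distrib]
  ring

/-- The random features model with polynomial activation `P`, as a polynomial in `x`. -/
noncomputable def rfPolynomial {N : ℕ} (ω : Fin N → (τ → ℝ) × ℝ) (a : Fin N → ℝ) :
    MvPolynomial τ ℝ :=
  (1 / √N) • ∑ i, a i • ridgePolynomial P (ω i)

lemma totalDegree_rfPolynomial_le {N : ℕ} (ω : Fin N → (τ → ℝ) × ℝ) (a : Fin N → ℝ) :
    (rfPolynomial P ω a).totalDegree ≤ P.natDegree :=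
  (MvPolynomial.totalDegree_smul_le _ _).trans <| MvPolynomial.totalDegree_finsetSum_le fun _ _ =>
    (MvPolynomial.totalDegree_smul_le _ _).trans (totalDegree_ridgePolynomial_le P _)

lemma eval_rfPolynomial {d N : ℕ} (ω : Fin N → (Fin d → ℝ) × ℝ) (a : Fin N → ℝ)
    (x : Fin d → ℝ) : (rfPolynomial P ω a).eval x = fRF d N (fun y => P.eval y) ω a x := by
  simp only [rfPolynomial, fRF, MvPolynomial.smul_eval, map_sum, eval_ridgePolynomial]

lemma coeffVec_rfPolynomial_smul {N : ℕ} (s : ℝ) (ω : Fin N → (τ → ℝ) × ℝ) (a : Fin N → ℝ)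
    (β : multiIndices τ p) :
    coeffVec p (rfPolynomial P (s • ω) a) β =
      s ^ β.1.degree * (designMatrix (featureMap p P s) ω *ᵥ a) β := by
  simp only [coeffVec, rfPolynomial, MvPolynomial.coeff_smul, MvPolynomial.coeff_sum,
    Pi.smul_apply, designMatrix, mulVec, dotProduct, of_apply, smul_eq_mul, Finset.mul_sum]
  refine Finset.sum_congr rfl fun i _ => ?_
  rw [← coeffVec, coeffVec_ridgePolynomial_smul]
  ring

variable {P} {s : ℝ}

lemma continuous_featureMap : Continuous (featureMap (τ := τ) p P s) :=
  continuous_pi fun β => (continuous_const.mul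
    ((continuous_apply β).comp (continuous_monomialVec.comp continuous_fst))).mul
      ((Polynomial.continuous _).comp (continuous_const.mul continuous_snd))

lemma eval_zero_hasseDeriv (m : ℕ) : (P.hasseDeriv m).eval 0 = P.coeff m := by
  rw [← Polynomial.taylor_coeff, Polynomial.taylor_zero]

-- At zero bias the features are nonzero multiples of the monomials, whatever `s` is.
lemma eq_zero_of_forall_dotProduct_featureMap (hP : ∀ m ≤ p, P.coeff m ≠ 0)
    {u : multiIndices τ p → ℝ} (hu : ∀ z, u ⬝ᵥ featureMap p P s z = 0) : u = 0 := by
  let c (β : multiIndices τ p) : ℝ := β.1.multinomial * P.coeff β.1.degree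
  have hc (β) : c β ≠ 0 := mul_ne_zero (Nat.cast_ne_zero.2 (Nat.multinomial_pos _ _).ne')
    (hP _ (mem_multiIndices.1 β.2))
  have huc : (fun β => u β * c β) = 0 := by
    refine eq_zero_of_forall_dotProduct_monomialVec fun x => ?_
    rw [← hu (x, 0)]
    refine Finset.sum_congr rfl fun β _ => ?_
    simp only [featureMap, c, mul_zero, eval_zero_hasseDeriv]
    ring
  exact funext fun β => (mul_eq_zero.1 (congrFun huc β)).resolve_right (hc β)

end RidgePolynomials

section GaussianMoments
variable {τ : Type*} [Fintype τ] {p d : ℕ} {P : Polynomial ℝ} {s : ℝ}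

instance (d : ℕ) (v : NNReal) : IsProbabilityMeasure (featMeas d v) := by
  unfold featMeas; infer_instance

instance (d : ℕ) : (featMeas d 1).IsOpenPosMeasure := by
  have : (gaussianReal 0 1).IsOpenPosMeasure :=
    (gaussianReal_absolutelyContinuous' 0 one_ne_zero).isOpenPosMeasure
  unfold featMeas; infer_instance

lemma integrable_pow_gaussianReal (n : ℕ) (m : ℝ) (v : NNReal) :
    Integrable (fun x : ℝ => x ^ n) (gaussianReal m v) := by
  have hmem : MemLp id n (gaussianReal m v) := memLp_id_gaussianReal n
  exact (hmem.integrable_norm_pow').mono' (by fun_prop) (ae_of_all _ fun x => (norm_pow x n).le)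

lemma integrable_eval_mul_gaussianReal (Q : Polynomial ℝ) (s m : ℝ) (v : NNReal) :
    Integrable (fun t => Q.eval (s * t)) (gaussianReal m v) := by
  simp only [Polynomial.eval_eq_sum_range, mul_pow, ← mul_assoc]
  exact integrable_finsetSum _ fun n _ => (integrable_pow_gaussianReal n m v).const_mul _

lemma integrable_monomialVec_mul_monomialVec (m : ℝ) (v : NNReal) (β γ : multiIndices τ p) :
    Integrable (fun x => monomialVec p x β * monomialVec p x γ)
      (Measure.pi fun _ : τ => gaussianReal m v) := by
  simp only [monomialVec, ← Finset.prod_mul_distrib, ← pow_add]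
  exact Integrable.fintype_prod fun j => integrable_pow_gaussianReal (β.1 j + γ.1 j) m v

lemma continuous_integral_eval_mul_gaussianReal (Q : Polynomial ℝ) (m : ℝ) (v : NNReal) :
    Continuous fun s => ∫ t, Q.eval (s * t) ∂gaussianReal m v := by
  simp only [Polynomial.eval_eq_sum_range, mul_pow, ← mul_assoc]
  simp_rw [integral_finsetSum _ fun n _ => (integrable_pow_gaussianReal n m v).const_mul _,
    integral_const_mul]
  fun_prop

lemma featureMap_mul_featureMap (z : (τ → ℝ) × ℝ) (β γ : multiIndices τ p) :
    featureMap p P s z β * featureMap p P s z γ =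
      β.1.multinomial * γ.1.multinomial * (monomialVec p z.1 β * monomialVec p z.1 γ) *
        (P.hasseDeriv β.1.degree * P.hasseDeriv γ.1.degree).eval (s * z.2) := by
  simp only [featureMap, Polynomial.eval_mul]
  ring

lemma integrable_featureMap_mul_featureMap (v : NNReal) (β γ : multiIndices (Fin d) p) :
    Integrable (fun z => featureMap p P s z β * featureMap p P s z γ) (featMeas d v) := by
  simp only [featureMap_mul_featureMap]
  exact ((integrable_monomialVec_mul_monomialVec 0 v β γ).const_mul _).mul_prod
    (integrable_eval_mul_gaussianReal _ s 0 v)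

lemma continuous_momentMatrix_featureMap (v : NNReal) :
    Continuous fun s => momentMatrix (featMeas d v) (featureMap p P s) := by
  refine continuous_matrix fun β γ => ?_
  set Q := P.hasseDeriv β.1.degree * P.hasseDeriv γ.1.degree
  have hfubini (s : ℝ) := integral_prod_mul (μ := Measure.pi fun _ : Fin d => gaussianReal 0 v)
    (ν := gaussianReal 0 v) (fun x => (β.1.multinomial * γ.1.multinomial : ℝ) *
      (monomialVec p x β * monomialVec p x γ)) (fun t => Q.eval (s * t))
  simp only [momentMatrix, of_apply, featureMap_mul_featureMap, featMeas, Q, hfubini]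
  exact continuous_const.mul (continuous_integral_eval_mul_gaussianReal Q 0 v)

lemma momentMatrix_featureMap_posDef (hP : ∀ m ≤ p, P.coeff m ≠ 0) :
    (momentMatrix (featMeas d 1) (featureMap p P s)).PosDef :=
  momentMatrix_posDef continuous_featureMap (integrable_featureMap_mul_featureMap 1)
    fun _ => eq_zero_of_forall_dotProduct_featureMap hP

lemma integral_sq_eval_le {Q : MvPolynomial (Fin d) ℝ} (hQ : Q.totalDegree ≤ p) :
    ∫ x, Q.eval x ^ 2 ∂gaussD d ≤
      (coeffVec p Q ⬝ᵥ coeffVec p Q) * ∫ x, monomialVec p x ⬝ᵥ monomialVec p x ∂gaussD d := by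
  rw [← integral_const_mul]
  refine integral_mono_of_nonneg (ae_of_all _ fun x => sq_nonneg _)
    ((integrable_finsetSum _ fun β _ =>
      integrable_monomialVec_mul_monomialVec 0 1 β β).const_mul _) (ae_of_all _ fun x => ?_)
  simp only [← coeffVec_dotProduct_monomialVec hQ]
  exact dotProduct_sq_le _ _

end GaussianMoments

section Scaling

lemma measurePreserving_const_mul_gaussianReal {ε : ℝ} (hε : 0 ≤ ε) :
    MeasurePreserving (fun x => √ε * x) (gaussianReal 0 1) (gaussianReal 0 ε.toNNReal) := by
  refine ⟨by fun_prop, ?_⟩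
  rw [gaussianReal_map_const_mul, mul_zero, mul_one]
  congr 1
  ext
  simp [Real.sq_sqrt hε, hε]

lemma measurePreserving_smul_featMeas {ε : ℝ} (hε : 0 ≤ ε) (d : ℕ) :
    MeasurePreserving (fun z : (Fin d → ℝ) × ℝ => √ε • z) (featMeas d 1)
      (featMeas d ε.toNNReal) :=
  (measurePreserving_pi _ _ fun _ => measurePreserving_const_mul_gaussianReal hε).prod
    (measurePreserving_const_mul_gaussianReal hε)

lemma pi_featMeas_preimage_smul_le {ε : ℝ} (hε : 0 ≤ ε) (d N : ℕ)
    (E : Set (Fin N → (Fin d → ℝ) × ℝ)) :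
    (Measure.pi fun _ : Fin N => featMeas d 1) ((√ε • ·) ⁻¹' E) ≤
      (Measure.pi fun _ : Fin N => featMeas d ε.toNNReal) E := by
  have h := measurePreserving_pi (fun _ : Fin N => featMeas d 1) _ fun _ =>
    measurePreserving_smul_featMeas hε d
  rw [← h.map_eq]
  exact Measure.le_map_apply h.aemeasurable E

end Scaling

section Interpolation
variable {d N p : ℕ} {P : Polynomial ℝ} {s κ : ℝ} {ω : Fin N → (Fin d → ℝ) × ℝ}

lemma exists_rfPolynomial_smul_eq (hP : P.natDegree ≤ p) (hs : s ≠ 0) (hκ : 0 ≤ κ)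
    (hω : IsConditioned κ (empiricalMomentMatrix (featureMap p P s) ω))
    {G : MvPolynomial (Fin d) ℝ} (hG : G.totalDegree ≤ p) :
    ∃ a, rfPolynomial P (s • ω) a = G ∧
      a ⬝ᵥ a ≤ κ * ∑ β, (coeffVec p G β / s ^ β.1.degree) ^ 2 := by
  rw [← designMatrix_mul_transpose] at hω
  obtain ⟨a, ha, hnorm⟩ := hω.exists_mulVec_eq hκ fun β => coeffVec p G β / s ^ β.1.degree
  refine ⟨a, ext_of_coeffVec_eq ((totalDegree_rfPolynomial_le P _ a).trans hP) hG ?_, ?_⟩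
  · ext β
    rw [coeffVec_rfPolynomial_smul, ha, mul_div_cancel₀ _ (pow_ne_zero _ hs)]
  · simpa only [dotProduct, ← sq] using hnorm

lemma pow_mul_sum_sq_coeffVec_div_le (hs : 0 < s) (hs1 : s ≤ 1) (G : MvPolynomial (Fin d) ℝ) :
    s ^ (2 * G.totalDegree) * ∑ β, (coeffVec p G β / s ^ β.1.degree) ^ 2 ≤
      coeffVec p G ⬝ᵥ coeffVec p G := by
  simp only [dotProduct, ← sq, Finset.mul_sum]
  refine Finset.sum_le_sum fun β _ => ?_
  rcases lt_or_ge G.totalDegree β.1.degree with hβ | hβ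
  · simp [coeffVec, MvPolynomial.coeff_eq_zero_of_totalDegree_lt hβ]
  · rw [div_pow, ← pow_mul', mul_div_left_comm]
    refine mul_le_of_le_one_right (sq_nonneg _) (div_le_one_of_le₀ ?_ (by positivity))
    exact pow_le_pow_of_le_one hs.le hs1 (Nat.mul_le_mul_left 2 hβ)

lemma sum_sq_coeffVec_sub_truncTotal_le (hs : 0 ≤ s) (hs1 : s ≤ 1) (hκ : 0 ≤ κ)
    (hω : IsConditioned κ (empiricalMomentMatrix (featureMap p P s) ω))
    (a : Fin N → ℝ) (q : ℕ) :
    let Q := rfPolynomial P (s • ω) a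
    let R := Q - MvPowerSeries.truncTotal (q + 1) (Q : MvPowerSeries (Fin d) ℝ)
    coeffVec p R ⬝ᵥ coeffVec p R ≤ s ^ (2 * (q + 1)) * (κ * (a ⬝ᵥ a)) := by
  intro Q R
  rw [← designMatrix_mul_transpose] at hω
  set y := designMatrix (featureMap p P s) ω *ᵥ a
  have hR (β : multiIndices (Fin d) p) : coeffVec p R β ^ 2 ≤ s ^ (2 * (q + 1)) * y β ^ 2 := by
    rw [coeffVec, MvPolynomial.coeff_sub, MvPowerSeries.coeff_truncTotal_eq_ite,
      MvPolynomial.coeff_coe]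
    split_ifs with hβ
    · rw [sub_self, zero_pow two_ne_zero]
      positivity
    · rw [sub_zero, ← coeffVec, coeffVec_rfPolynomial_smul, mul_pow, ← pow_mul']
      gcongr ?_ * _
      exact pow_le_pow_of_le_one hs hs1 (Nat.mul_le_mul_left 2 (not_lt.1 hβ))
  calc coeffVec p R ⬝ᵥ coeffVec p R ≤ s ^ (2 * (q + 1)) * (y ⬝ᵥ y) := by
        simpa only [dotProduct, ← sq, Finset.mul_sum] using Finset.sum_le_sum fun β _ => hR β
    _ ≤ s ^ (2 * (q + 1)) * (κ * (a ⬝ᵥ a)) := by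
        gcongr
        exact hω.mulVec_dotProduct_self_le hκ a

/-- The factor of `s ^ 2` in the bound for the squared `L²(γ_d)` distance between a random features
model of scale `s`, with weights no larger than needed to represent `G`, and the polynomials of
degree at most that of `G`. -/
noncomputable def leakageConst (p : ℕ) (κ : ℝ) (G : MvPolynomial (Fin d) ℝ) : ℝ :=
  κ ^ 2 * (coeffVec p G ⬝ᵥ coeffVec p G) * ∫ x, monomialVec p x ⬝ᵥ monomialVec p x ∂gaussD d

lemma exists_integral_sq_fRF_sub_le (hP : P.natDegree ≤ p) (hs : 0 < s) (hs1 : s ≤ 1)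
    (hκ : 0 ≤ κ)
    (hω : IsConditioned κ (empiricalMomentMatrix (featureMap p P s) ω))
    {G : MvPolynomial (Fin d) ℝ} (hG : G.totalDegree ≤ p) {a : Fin N → ℝ}
    (ha : ∀ b, rfPolynomial P (s • ω) b = G → a ⬝ᵥ a ≤ b ⬝ᵥ b) :
    ∃ h : MvPolynomial (Fin d) ℝ, h.totalDegree ≤ G.totalDegree ∧
      ∫ x, (fRF d N P.eval (s • ω) a x - h.eval x) ^ 2 ∂gaussD d ≤
        s ^ 2 * leakageConst p κ G := by
  set q := G.totalDegree
  set C := ∫ x, monomialVec p x ⬝ᵥ monomialVec p x ∂gaussD d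
  set Q := rfPolynomial P (s • ω) a
  set h := MvPowerSeries.truncTotal (q + 1) (Q : MvPowerSeries (Fin d) ℝ)
  have hC : 0 ≤ C := integral_nonneg fun x => dotProduct_self_nonneg _
  have hdeg : h.totalDegree ≤ q :=
    Nat.lt_succ_iff.1 (MvPowerSeries.totalDegree_truncTotal_lt _ q.succ_ne_zero)
  have hQh : (Q - h).totalDegree ≤ p := (MvPolynomial.totalDegree_sub _ _).trans
    (max_le ((totalDegree_rfPolynomial_le P _ a).trans hP) (hdeg.trans hG))
  obtain ⟨b, hb, hbnorm⟩ := exists_rfPolynomial_smul_eq hP hs.ne' hκ hω hG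
  refine ⟨h, hdeg, ?_⟩
  calc ∫ x, (fRF d N P.eval (s • ω) a x - h.eval x) ^ 2 ∂gaussD d
      = ∫ x, (Q - h).eval x ^ 2 ∂gaussD d := by simp only [Q, map_sub, eval_rfPolynomial]
    _ ≤ (coeffVec p (Q - h) ⬝ᵥ coeffVec p (Q - h)) * C := integral_sq_eval_le hQh
    _ ≤ s ^ (2 * (q + 1)) * (κ * (a ⬝ᵥ a)) * C := by
      gcongr
      exact sum_sq_coeffVec_sub_truncTotal_le hs.le hs1 hκ hω a q
    _ ≤ s ^ (2 * (q + 1)) *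
        (κ * (κ * ∑ β, (coeffVec p G β / s ^ β.1.degree) ^ 2)) * C := by
      gcongr
      exact (ha b hb).trans hbnorm
    _ = s ^ 2 * κ ^ 2 * (s ^ (2 * q) * ∑ β, (coeffVec p G β / s ^ β.1.degree) ^ 2) * C := by
      ring
    _ ≤ s ^ 2 * κ ^ 2 * (coeffVec p G ⬝ᵥ coeffVec p G) * C := by
      gcongr
      exact pow_mul_sum_sq_coeffVec_div_le hs hs1 G
    _ = s ^ 2 * leakageConst p κ G := by
      rw [leakageConst]
      ring

end Interpolation

section MinimalNormInterpolant
variable {d N : ℕ} {σ : ℝ → ℝ} {U : Set (Fin d → ℝ)} {F : MvPolynomial (Fin d) ℝ}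
  {ω : Fin N → (Fin d → ℝ) × ℝ}

lemma exists_unique_sum_sq_le {n : Type*} [Fintype n] {K : Set (n → ℝ)} (hconv : Convex ℝ K)
    (hclosed : IsClosed K) (hne : K.Nonempty) :
    ∃ v ∈ K, (∀ a ∈ K, ∑ i, v i ^ 2 ≤ ∑ i, a i ^ 2) ∧
      ∀ a ∈ K, (∀ a' ∈ K, ∑ i, a i ^ 2 ≤ ∑ i, a' i ^ 2) → a = v := by
  let e := EuclideanSpace.equiv n ℝ
  have hnorm (v w : n → ℝ) : ‖e.symm v‖ ≤ ‖e.symm w‖ ↔ ∑ i, v i ^ 2 ≤ ∑ i, w i ^ 2 := by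
    rw [← sq_le_sq₀ (norm_nonneg _) (norm_nonneg _), EuclideanSpace.real_norm_sq_eq,
      EuclideanSpace.real_norm_sq_eq]
    rfl
  obtain ⟨v, hv, hmin, huniq⟩ := exists_unique_norm_le (K := e ⁻¹' K)
    (hconv.linear_preimage e.toLinearEquiv.toLinearMap) (hclosed.preimage e.continuous)
    (hne.preimage e.surjective)
  refine ⟨e v, hv, fun a ha => ?_, fun a ha hmin' => ?_⟩
  · simpa [hnorm] using (hnorm (e v) a).1 (by simpa using hmin (e.symm a) (by simpa using ha))
  · rw [← huniq (e.symm a) (by simpa using ha) fun w hw => ?_, e.apply_symm_apply]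
    simpa using (hnorm a (e w)).2 (hmin' _ hw)

lemma fRF_smul_add_smul (s t : ℝ) (a b : Fin N → ℝ) (x : Fin d → ℝ) :
    fRF d N σ ω (s • a + t • b) x = s * fRF d N σ ω a x + t * fRF d N σ ω b x := by
  simp only [fRF, Pi.add_apply, Pi.smul_apply, smul_eq_mul, add_mul, Finset.sum_add_distrib,
    mul_assoc, ← Finset.mul_sum]
  ring

lemma convex_interpSet : Convex ℝ (interpSet d N σ U F ω) := by
  intro a ha b hb s t _ _ hst x hx
  rw [fRF_smul_add_smul, ha x hx, hb x hx, ← add_mul, hst, one_mul]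

lemma isClosed_interpSet : IsClosed (interpSet d N σ U F ω) := by
  simp only [interpSet, Set.ofPred_forall]
  refine isClosed_iInter fun x => isClosed_iInter fun _ => isClosed_eq ?_ continuous_const
  unfold fRF
  fun_prop

end MinimalNormInterpolant

section SmallFeatures
variable {d N p : ℕ} {P : Polynomial ℝ} {s κ : ℝ} {ω : Fin N → (Fin d → ℝ) × ℝ}
  {U : Set (Fin d → ℝ)} {F G : MvPolynomial (Fin d) ℝ}

lemma exists_totalDegree_eq_minInterpDeg (hF : F.totalDegree ≤ p) :
    ∃ G : MvPolynomial (Fin d) ℝ, G.totalDegree ≤ p ∧ (∀ x ∈ Uᶜ, G.eval x = F.eval x) ∧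
      G.totalDegree = minInterpDeg d p U F :=
  Nat.sInf_mem (s := {k | ∃ G : MvPolynomial (Fin d) ℝ, G.totalDegree ≤ p ∧
    (∀ x ∈ Uᶜ, G.eval x = F.eval x) ∧ G.totalDegree = k})
    ⟨F.totalDegree, F, hF, fun _ _ => rfl, rfl⟩

lemma mem_interpSet_of_rfPolynomial_eq (hGF : ∀ x ∈ Uᶜ, G.eval x = F.eval x) {a : Fin N → ℝ}
    (ha : rfPolynomial P ω a = G) : a ∈ interpSet d N P.eval U F ω := fun x hx => by
  rw [← hGF x hx, ← ha, eval_rfPolynomial]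

lemma interpSet_nonempty (hP : P.natDegree ≤ p) (hs : s ≠ 0) (hκ : 0 ≤ κ)
    (hω : IsConditioned κ (empiricalMomentMatrix (featureMap p P s) ω))
    (hF : F.totalDegree ≤ p) : (interpSet d N P.eval U F (s • ω)).Nonempty :=
  let ⟨a, ha, _⟩ := exists_rfPolynomial_smul_eq hP hs hκ hω hF
  ⟨a, mem_interpSet_of_rfPolynomial_eq (fun _ _ => rfl) ha⟩

lemma exists_minimal_interpolant_near_totalDegree_le (hP : P.natDegree ≤ p) (hs : 0 < s)
    (hs1 : s ≤ 1) (hκ : 0 ≤ κ)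
    (hω : IsConditioned κ (empiricalMomentMatrix (featureMap p P s) ω))
    (hF : F.totalDegree ≤ p) (hG : G.totalDegree ≤ p) (hGF : ∀ x ∈ Uᶜ, G.eval x = F.eval x)
    {δ : ℝ} (hδ : 0 ≤ δ) (hsδ : s ^ 2 * leakageConst p κ G ≤ δ ^ 2) :
    ∃ astar ∈ interpSet d N P.eval U F (s • ω),
      (∀ a ∈ interpSet d N P.eval U F (s • ω), ∑ i, astar i ^ 2 ≤ ∑ i, a i ^ 2) ∧
      (∀ a ∈ interpSet d N P.eval U F (s • ω),
        (∀ a' ∈ interpSet d N P.eval U F (s • ω), ∑ i, a i ^ 2 ≤ ∑ i, a' i ^ 2) → a = astar) ∧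
      ∃ h : MvPolynomial (Fin d) ℝ, h.totalDegree ≤ G.totalDegree ∧
        √(∫ x, (fRF d N P.eval (s • ω) astar x - h.eval x) ^ 2 ∂gaussD d) ≤ δ := by
  obtain ⟨a, ha, hmin, huniq⟩ := exists_unique_sum_sq_le convex_interpSet isClosed_interpSet
    (interpSet_nonempty (U := U) hP hs.ne' hκ hω hF)
  obtain ⟨h, hdeg, hint⟩ := exists_integral_sq_fRF_sub_le hP hs hs1 hκ hω hG (a := a) fun b hb => by
    simpa only [dotProduct, ← sq] using hmin b (mem_interpSet_of_rfPolynomial_eq hGF hb)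
  exact ⟨a, ha, hmin, huniq, h, hdeg, Real.sqrt_le_iff.2 ⟨hδ, hint.trans hsδ⟩⟩

lemma exists_forall_ofReal_le_pi_featMeas {ε η : ℝ} (hε : 0 ≤ ε) (hη : 0 < η)
    (hκ : ∀ᶠ A in 𝓝 (momentMatrix (featMeas d 1) (featureMap p P √ε)), IsConditioned κ A)
    {E : ∀ N, Set (Fin N → (Fin d → ℝ) × ℝ)}
    (hE : ∀ N (ω : Fin N → (Fin d → ℝ) × ℝ),
      IsConditioned κ (empiricalMomentMatrix (featureMap p P √ε) ω) → √ε • ω ∈ E N) :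
    ∃ N₀, ∀ N ≥ N₀, ENNReal.ofReal (1 - η) ≤
      (Measure.pi fun _ : Fin N => featMeas d ε.toNNReal) (E N) := by
  have hlim := tendsto_pi_measure_empiricalMomentMatrix continuous_featureMap.measurable
    (integrable_featureMap_mul_featureMap 1) hκ
  have hlt : ENNReal.ofReal (1 - η) < 1 := by simpa using hη
  obtain ⟨N₀, hN₀⟩ := eventually_atTop.1 (hlim.eventually_const_lt hlt)
  refine ⟨N₀, fun N hN => (hN₀ N hN).le.trans ?_⟩
  exact (measure_mono fun ω hω => hE N ω hω).trans (pi_featMeas_preimage_smul_le hε d N (E N))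

lemma exists_eventually_isConditioned_featureMap (hP : ∀ m ≤ p, P.coeff m ≠ 0) :
    ∃ κ > 0, ∀ᶠ ε : ℝ in 𝓝 0, ∀ᶠ A in 𝓝 (momentMatrix (featMeas d 1) (featureMap p P √ε)),
      IsConditioned κ A := by
  obtain ⟨κ, hκ, h⟩ := exists_eventually_isConditioned
    (momentMatrix_featureMap_posDef (d := d) (s := √0) hP)
  have hcont : Continuous fun ε : ℝ => momentMatrix (featMeas d 1) (featureMap p P √ε) :=
    (continuous_momentMatrix_featureMap 1).comp Real.continuous_sqrt
  exact ⟨κ, hκ, hcont.continuousAt.eventually (eventually_eventually_nhds.2 h)⟩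

lemma exists_polynomial_eval_eq {σ : ℝ → ℝ} {cf : Fin (p + 1) → ℝ}
    (hσ : ∀ y, σ y = ∑ k : Fin (p + 1), cf k * y ^ (k : ℕ)) :
    ∃ P : Polynomial ℝ, P.eval = σ ∧ P.natDegree ≤ p ∧ ∀ k : Fin (p + 1), P.coeff k = cf k := by
  refine ⟨∑ k : Fin (p + 1), Polynomial.monomial k (cf k), ?_, ?_, fun k => ?_⟩
  · ext y
    simp [hσ, Polynomial.eval_finsetSum]
  · exact Polynomial.natDegree_sum_le_of_forall_le _ _ fun k _ =>
      (Polynomial.natDegree_monomial_le _).trans (Nat.lt_succ_iff.1 k.2)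
  · simp [Polynomial.coeff_monomial, Fin.val_inj]

end SmallFeatures

/-- GOTU for random features in the small features regime.
(i) For every ε > 0 and η > 0, for all large enough N, with probability ≥ 1 − η the
interpolation set A is nonempty. (ii) For all δ, η > 0 there is ε₀ > 0 such that for all
ε ∈ (0, ε₀) and all large enough N, with probability ≥ 1 − η the set A is nonempty, has a
unique element `a*` of minimal Euclidean norm, and the `L²(γ_d)` distance of
`x ↦ f_RF(a*; x)` to `Π_{p*}(ℝ^d)` is at most δ. -/
theorem stmt0 (d p : ℕ) (hd : 1 ≤ d) (hp : 1 ≤ p)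
    (σ : ℝ → ℝ) (cf : Fin (p + 1) → ℝ) (hcf : ∀ k, cf k ≠ 0)
    (hσ : ∀ y, σ y = ∑ k : Fin (p + 1), cf k * y ^ (k : ℕ))
    (F : MvPolynomial (Fin d) ℝ) (hF : F.totalDegree ≤ p)
    (U : Set (Fin d → ℝ)) (hU : U ≠ Set.univ) :
    -- (i)
    (∀ ε : ℝ, 0 < ε → ∀ η : ℝ, 0 < η → ∃ N₀ : ℕ, ∀ N : ℕ, N₀ ≤ N →
      ENNReal.ofReal (1 - η) ≤
        (Measure.pi fun _ : Fin N => featMeas d ε.toNNReal)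
          {ω | (interpSet d N σ U F ω).Nonempty}) ∧
    -- (ii)
    (∀ δ : ℝ, 0 < δ → ∀ η : ℝ, 0 < η → ∃ ε₀ > (0 : ℝ), ∀ ε : ℝ, 0 < ε → ε < ε₀ →
      ∃ N₀ : ℕ, ∀ N : ℕ, N₀ ≤ N →
        ENNReal.ofReal (1 - η) ≤
          (Measure.pi fun _ : Fin N => featMeas d ε.toNNReal)
            {ω | ∃ astar ∈ interpSet d N σ U F ω,
              (∀ a ∈ interpSet d N σ U F ω, ∑ i, astar i ^ 2 ≤ ∑ i, a i ^ 2) ∧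
              (∀ a ∈ interpSet d N σ U F ω,
                (∀ a' ∈ interpSet d N σ U F ω, ∑ i, a i ^ 2 ≤ ∑ i, a' i ^ 2) →
                a = astar) ∧
              ∃ h : MvPolynomial (Fin d) ℝ, h.totalDegree ≤ minInterpDeg d p U F ∧
                Real.sqrt (∫ x, (fRF d N σ ω astar x - MvPolynomial.eval x h) ^ 2
                    ∂(gaussD d)) ≤ δ}) := by
  obtain ⟨P, rfl, hPdeg, hPcoeff⟩ := exists_polynomial_eval_eq hσ
  have hP (m : ℕ) (hm : m ≤ p) : P.coeff m ≠ 0 := hPcoeff ⟨m, Nat.lt_succ_of_le hm⟩ ▸ hcf _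
  constructor
  · intro ε hε η hη
    obtain ⟨κ, hκ, hcond⟩ := exists_eventually_isConditioned
      (momentMatrix_featureMap_posDef (d := d) (s := √ε) hP)
    exact exists_forall_ofReal_le_pi_featMeas hε.le hη hcond fun N ω hω =>
      interpSet_nonempty hPdeg (Real.sqrt_pos.2 hε).ne' hκ.le hω hF
  · intro δ hδ η hη
    obtain ⟨G, hG, hGF, hGdeg⟩ := exists_totalDegree_eq_minInterpDeg (U := U) hF
    obtain ⟨κ, hκ, hcond⟩ := exists_eventually_isConditioned_featureMap (d := d) hP
    have hsmall : ∀ᶠ ε : ℝ in 𝓝 0, ε * leakageConst p κ G < δ ^ 2 :=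
      (continuous_id.mul continuous_const).continuousAt.eventually_lt_const
        (by simpa using pow_pos hδ 2)
    obtain ⟨ε₀, hε₀, hball⟩ := Metric.eventually_nhds_iff.1
      (hcond.and (hsmall.and (eventually_le_nhds one_pos)))
    refine ⟨ε₀, hε₀, fun ε hε hεε₀ => ?_⟩
    obtain ⟨hεcond, hεδ, hε1⟩ := hball (y := ε) (by simpa [abs_of_pos hε] using hεε₀)
    refine exists_forall_ofReal_le_pi_featMeas hε.le hη hεcond fun N ω hω => ?_
    rw [← hGdeg]
    exact exists_minimal_interpolant_near_totalDegree_le hPdeg (Real.sqrt_pos.2 hε)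
      (Real.sqrt_le_one.2 hε1) hκ.le hω hF hG hGF hδ.le (by rw [Real.sq_sqrt hε.le]; exact hεδ.le)
end

section
/- Fix integers d ≥ 1 and p ≥ 1, let σ satisfy Assumption A, and fix ε > 0. Let (w_i, b_i)_{i ≥ 1} be i.i.d. with w_i ∼ N(0, ε I_d) and b_i ∼ N(0, ε) independent. Then for every η > 0 there exists N₀ ∈ ℕ such that for all N ≥ N₀, with probability at least 1 − η, the linear span of the functions x ↦ σ(⟨w_i, x⟩ + b_i), i = 1, …, N, is equal to Π_p(ℝ^d). (The span is always contained in Π_p(ℝ^d) since σ is a polynomial of degree p.) -/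
open MeasureTheory ProbabilityTheory

/-!
Homogenise: with `y = (x, 1)` and `θ = (w, b)`, a feature is `Q(⟨θ, y⟩)`, and `Π_p` is spanned by
the monomials `y ^ s` with `|s| = p`. For a linear functional `ℓ`, the multinomial theorem shows
that `ℓ (Q(⟨θ, y⟩))` is a polynomial in `θ` with coefficient `Q_{|s|} · multinomial(s) · ℓ(y ^ s)`
at `θ ^ s`. If `ℓ` does not vanish on `Π_p` and `Q_p ≠ 0`, this polynomial is nonzero, hence almost
surely does not vanish at `θ`. So a random feature almost surely avoids any given proper subspace of
`Π_p`, each new independent feature almost surely raises the dimension of the span, and `dim Π_p`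
features suffice.
-/

instance isProbabilityMeasure_featMeas (d : ℕ) (v : NNReal) :
    IsProbabilityMeasure (featMeas d v) := by
  rw [featMeas]
  infer_instance

section ProductMeasures

variable {κ E : Type*}

/-- The point `(x, t)` written as a single vector indexed by `Option κ`, with `t` at `none`. It
turns the affine form `⟨w, x⟩ + b` into the bilinear pairing of `(w, b)` with `(x, 1)`. -/
def homogeneousCoords (z : (κ → E) × E) : Option κ → E := fun o => o.elim z.2 z.1

variable [MeasurableSpace E]

@[fun_prop]
lemma measurable_homogeneousCoords : Measurable (homogeneousCoords : (κ → E) × E → Option κ → E) :=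
  measurable_pi_iff.2 fun o => by
    cases o with
    | none => exact measurable_snd
    | some j => exact (measurable_pi_apply j).comp measurable_fst

variable [Fintype κ]

lemma map_homogeneousCoords_prod (μ : Option κ → Measure E) [∀ o, SigmaFinite (μ o)] :
    ((Measure.pi fun j => μ (some j)).prod (μ none)).map homogeneousCoords = Measure.pi μ := by
  rw [← Measure.pi_map_piOptionEquivProd μ]
  congr 1
  ext z o
  cases o <;> rfl

lemma ae_pi_option {μ : Option κ → Measure E} [∀ o, SigmaFinite (μ o)] {p : (Option κ → E) → Prop}
    (hp : MeasurableSet {x | p x})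
    (h : ∀ᵐ x ∂Measure.pi fun j => μ (some j), ∀ᵐ t ∂μ none, p (homogeneousCoords (x, t))) :
    ∀ᵐ x ∂Measure.pi μ, p x := by
  rw [← map_homogeneousCoords_prod, ae_map_iff (by fun_prop) hp]
  exact (Measure.ae_prod_iff_ae_ae (measurable_homogeneousCoords hp)).2 h

lemma ae_pi_of_equiv {κ' : Type*} [Fintype κ'] (e : κ ≃ κ') {μ : κ' → Measure E}
    [∀ j, SigmaFinite (μ j)] {p : (κ' → E) → Prop}
    (h : ∀ᵐ x ∂Measure.pi fun j => μ (e j), p (x ∘ e.symm)) : ∀ᵐ x ∂Measure.pi μ, p x := by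
  rw [← Measure.pi_map_piCongrLeft e μ, (MeasurableEquiv.measurableEmbedding _).ae_map_iff]
  filter_upwards [h] with x hx
  convert hx
  ext j
  obtain ⟨i, rfl⟩ := e.surjective j
  simp [MeasurableEquiv.piCongrLeft_apply_apply]

end ProductMeasures

section Hypersurfaces

/-- The measure `μ` charges no algebraic hypersurface: every nonzero polynomial is nonzero
`μ`-almost everywhere. -/
def AvoidsHypersurfaces {τ : Type*} (μ : Measure (τ → ℝ)) : Prop :=
  ∀ F : MvPolynomial τ ℝ, F ≠ 0 → ∀ᵐ x ∂μ, MvPolynomial.eval x F ≠ 0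

lemma ae_polynomial_eval_ne_zero (μ : Measure ℝ) [NullSingletonClass μ] {q : Polynomial ℝ}
    (hq : q ≠ 0) : ∀ᵐ t ∂μ, q.eval t ≠ 0 := by
  simpa [ae_iff] using (Polynomial.finite_setOfPred_isRoot hq).measure_zero μ

lemma avoidsHypersurfaces_pi {τ : Type*} [Fintype τ] (μ : τ → Measure ℝ) [∀ i, SigmaFinite (μ i)]
    [∀ i, NullSingletonClass (μ i)] : AvoidsHypersurfaces (Measure.pi μ) := by
  revert μ
  refine Fintype.induction_empty_option (P := fun τ _ => ∀ (μ : τ → Measure ℝ)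
    [∀ i, SigmaFinite (μ i)] [∀ i, NullSingletonClass (μ i)], AvoidsHypersurfaces (Measure.pi μ))
    (fun α β _ e ih μ _ _ F hF => ?_) (fun μ _ _ F hF => .of_forall fun x => ?_)
    (fun α _ ih μ _ _ F hF => ?_) τ
  · let _ := Fintype.ofEquiv β e.symm
    refine ae_pi_of_equiv e ?_
    have hrename : MvPolynomial.rename e.symm F ≠ 0 :=
      (map_ne_zero_iff _ (MvPolynomial.rename_injective _ e.symm.injective)).2 hF
    filter_upwards [ih (fun i => μ (e i)) _ hrename] with x hx
    rwa [MvPolynomial.eval_rename] at hx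
  · rw [MvPolynomial.eq_C_of_isEmpty F] at hF ⊢
    simpa using hF
  · refine ae_pi_option ?_ ?_
    · exact (MvPolynomial.continuous_eval F).measurable (measurableSet_singleton 0).compl
    set q := MvPolynomial.optionEquivLeft ℝ α F
    have hq : q.leadingCoeff ≠ 0 := by simpa [q] using hF
    filter_upwards [ih (fun i => μ (some i)) _ hq] with x hx
    have hqx : q.map (MvPolynomial.eval x) ≠ 0 := fun h =>
      hx (by simpa using congrArg (Polynomial.coeff · q.natDegree) h)
    filter_upwards [ae_polynomial_eval_ne_zero (μ none) hqx] with t ht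
    rwa [← MvPolynomial.optionEquivLeft_elim_eval] at ht

lemma avoidsHypersurfaces_map_featMeas (d : ℕ) {v : NNReal} (hv : v ≠ 0) :
    AvoidsHypersurfaces ((featMeas d v).map homogeneousCoords) := by
  have := nullSingletonClass_gaussianReal (μ := 0) hv
  rw [featMeas, map_homogeneousCoords_prod fun _ : Option (Fin d) => gaussianReal 0 v]
  exact avoidsHypersurfaces_pi _

end Hypersurfaces

section Span

lemma ae_linearIndependent_pi {E : Type*} [NormedAddCommGroup E] [NormedSpace ℝ E]
    [FiniteDimensional ℝ E] [MeasurableSpace E] [BorelSpace E] {ι : Type*} [Fintype ι]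
    (μ : ι → Measure E) [∀ i, SigmaFinite (μ i)]
    (hμ : ∀ i, ∀ W : Submodule ℝ E, W < ⊤ → ∀ᵐ v ∂μ i, v ∉ W)
    (hcard : Fintype.card ι ≤ Module.finrank ℝ E) :
    ∀ᵐ v ∂Measure.pi μ, LinearIndependent ℝ v := by
  have : ProperSpace E := FiniteDimensional.proper ℝ E
  revert μ
  refine Fintype.induction_empty_option (P := fun ι _ => Fintype.card ι ≤ Module.finrank ℝ E →
    ∀ (μ : ι → Measure E) [∀ i, SigmaFinite (μ i)],
    (∀ i, ∀ W : Submodule ℝ E, W < ⊤ → ∀ᵐ v ∂μ i, v ∉ W) →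
    ∀ᵐ v ∂Measure.pi μ, LinearIndependent ℝ v)
    (fun α β _ e ih hβ μ _ hμ => ?_)
    (fun _ μ _ _ => .of_forall fun v => linearIndependent_empty_type)
    (fun α _ ih hα μ _ hμ => ?_) ι hcard
  · let _ := Fintype.ofEquiv β e.symm
    refine ae_pi_of_equiv e ?_
    filter_upwards [ih ((Fintype.card_congr e).trans_le hβ) _ fun i => hμ (e i)] with v hv
    rwa [linearIndependent_equiv]
  · rw [Fintype.card_option] at hα
    refine ae_pi_option isOpen_setOfPred_linearIndependent.measurableSet ?_
    filter_upwards [ih (by lia) _ fun i => hμ (some i)] with v hv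
    have hspan : Submodule.span ℝ (Set.range v) < ⊤ := by
      refine Submodule.lt_top_of_finrank_lt_finrank ?_
      rw [finrank_span_eq_card hv]
      exact hα
    filter_upwards [hμ none _ hspan] with w hw
    exact linearIndependent_option.2 ⟨hv, hw⟩

lemma ae_span_range_eq_top_of_iIndepFun {E : Type*} [NormedAddCommGroup E] [NormedSpace ℝ E]
    [FiniteDimensional ℝ E] [MeasurableSpace E] [BorelSpace E] {ι Ω : Type*} [Fintype ι]
    [MeasurableSpace Ω] {P : Measure Ω} {X : ι → Ω → E} (hX : ∀ i, AEMeasurable (X i) P)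
    (hindep : iIndepFun X P)
    (hnull : ∀ i, ∀ W : Submodule ℝ E, W < ⊤ → ∀ᵐ ω ∂P, X i ω ∉ W)
    (hcard : Module.finrank ℝ E ≤ Fintype.card ι) :
    ∀ᵐ ω ∂P, Submodule.span ℝ (Set.range fun i => X i ω) = ⊤ := by
  have := hindep.isProbabilityMeasure
  obtain ⟨s, -, hs⟩ := Finset.exists_subset_card_eq (s := Finset.univ) hcard
  have := fun i : s => Measure.isProbabilityMeasure_map (hX i)
  have hlaw : P.map (fun ω (i : s) => X i ω) = Measure.pi fun i : s => P.map (X i) :=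
    (hindep.precomp Subtype.val_injective).map_fun_eq_pi_map fun i => hX i
  have hli : ∀ᵐ v ∂P.map (fun ω (i : s) => X i ω), LinearIndependent ℝ v := by
    rw [hlaw]
    refine ae_linearIndependent_pi _ (fun i W hW => ?_) (by simp [hs])
    exact (ae_map_iff (hX i) W.closed_of_finiteDimensional.measurableSet.compl).2 (hnull i W hW)
  filter_upwards [ae_of_ae_map (aemeasurable_pi_lambda (fun ω (i : s) => X i ω) fun i => hX i) hli]
    with ω hω
  rw [eq_top_iff, ← hω.span_eq_top_of_card_eq_finrank' (by simp [hs])]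
  exact Submodule.span_mono (Set.range_comp_subset_range Subtype.val fun i => X i ω)

lemma ae_span_range_eq_top_pi {V ι Θ : Type*} [AddCommGroup V] [Module ℝ V]
    [FiniteDimensional ℝ V] [Fintype ι] [MeasurableSpace Θ] (μ : ι → Measure Θ)
    [∀ i, IsProbabilityMeasure (μ i)] {φ : Θ → V}
    (hφ : ∀ ℓ : Module.Dual ℝ V, Measurable fun θ => ℓ (φ θ))
    (hne : ∀ i, ∀ ℓ : Module.Dual ℝ V, ℓ ≠ 0 → ∀ᵐ θ ∂μ i, ℓ (φ θ) ≠ 0)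
    (hcard : Module.finrank ℝ V ≤ Fintype.card ι) :
    ∀ᵐ ω ∂Measure.pi μ, Submodule.span ℝ (Set.range fun i => φ (ω i)) = ⊤ := by
  let e := (Module.finBasis ℝ V).equivFun
  have he : Measurable fun θ => e (φ θ) :=
    measurable_pi_iff.2 fun j => hφ ((LinearMap.proj j).comp e.toLinearMap)
  have hnull : ∀ i, ∀ W : Submodule ℝ (Fin (Module.finrank ℝ V) → ℝ), W < ⊤ →
      ∀ᵐ ω ∂Measure.pi μ, e (φ (ω i)) ∉ W := by
    intro i W hW
    obtain ⟨f, hf0, hf⟩ := W.exists_le_ker_of_lt_top hW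
    have hfe : f.comp e.toLinearMap ≠ 0 := fun h =>
      hf0 (by simpa [LinearMap.comp_assoc] using congrArg (·.comp e.symm.toLinearMap) h)
    filter_upwards [(Measure.tendsto_eval_ae_ae (i := i)).eventually (hne i _ hfe)] with ω hω hW
    exact hω (hf hW)
  filter_upwards [ae_span_range_eq_top_of_iIndepFun
    (fun i => (he.comp (measurable_pi_apply i)).aemeasurable)
    (iIndepFun_pi fun _ => he.aemeasurable) hnull (by simpa using hcard)] with ω hω
  rw [← Submodule.map_eq_top_iff (e := e), Submodule.map_span, ← Set.range_comp]
  exact hω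

end Span

section Algebra

open MvPolynomial

variable {R A τ : Type*} [CommSemiring R] [CommSemiring A] [Algebra R A]

lemma coeff_aeval_sum_smul_X [Fintype τ] (Q : Polynomial R) (y : τ → A) (s : τ →₀ ℕ) :
    coeff s (Polynomial.aeval (∑ i, y i • X i : MvPolynomial τ A) Q) =
      Q.coeff s.degree • (s.multinomial * s.prod fun i m => y i ^ m) := by
  have hpow : ∀ n, coeff s ((∑ i, y i • X i : MvPolynomial τ A) ^ n) =
      if s.degree = n then s.multinomial * s.prod fun i m => y i ^ m else 0 :=
    fun n => coeff_linearCombination_X_pow_of_fintype y s n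
  rw [Polynomial.aeval_eq_sum_range, coeff_sum]
  simp only [coeff_smul, hpow, smul_ite, smul_zero, Finset.sum_ite_eq, Finset.mem_range]
  split_ifs with hs
  · rfl
  · rw [Q.coeff_eq_zero_of_natDegree_lt (by lia), zero_smul]

lemma totalDegree_polynomial_aeval_le (Q : Polynomial R) (L : MvPolynomial τ R) :
    (Polynomial.aeval L Q).totalDegree ≤ Q.natDegree * L.totalDegree := by
  rw [Polynomial.aeval_eq_sum_range]
  refine totalDegree_finsetSum_le fun n hn => ?_
  calc (Q.coeff n • L ^ n).totalDegree ≤ n * L.totalDegree :=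
        (totalDegree_smul_le _ _).trans (totalDegree_pow L n)
    _ ≤ Q.natDegree * L.totalDegree :=
        Nat.mul_le_mul_right _ (Finset.mem_range_succ_iff.1 hn)

lemma eval_polynomial_aeval (Q : Polynomial R) (L : MvPolynomial τ A) (θ : τ → A) :
    eval θ (Polynomial.aeval L Q) = Polynomial.aeval (eval θ L) Q :=
  (Polynomial.aeval_algHom_apply ((aeval θ).restrictScalars R) L Q).symm

lemma exists_eval_eq_apply_eval (ℓ : A →ₗ[R] R) (G : MvPolynomial τ A) :
    ∃ F : MvPolynomial τ R, (∀ s, coeff s F = ℓ (coeff s G)) ∧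
      ∀ θ : τ → R, eval θ F = ℓ (eval (fun i => algebraMap R A (θ i)) G) := by
  refine ⟨AddMonoidAlgebra.map ℓ.toAddMonoidHom G, fun s => rfl, fun θ => ?_⟩
  induction G using MvPolynomial.induction_on' with
  | monomial s a =>
    have : AddMonoidAlgebra.map ℓ.toAddMonoidHom (monomial s a) = monomial s (ℓ a) :=
      AddMonoidAlgebra.map_single ..
    rw [this, eval_monomial, eval_monomial]
    simp [Finsupp.prod, ← map_pow, ← map_prod, mul_comm a, ← Algebra.smul_def, mul_comm (ℓ a)]
  | add G H hG hH => rw [map_add, map_add ℓ, AddMonoidAlgebra.map_add, map_add, hG, hH]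

end Algebra

section PolynomialFunctions

open MvPolynomial

/-- `Π_p(ℝ^κ)`, the polynomial functions on `ℝ^κ` of total degree at most `p`. -/
noncomputable def polynomialFunctionsLE (κ : Type*) (p : ℕ) : Submodule ℝ ((κ → ℝ) → ℝ) :=
  (restrictTotalDegree κ ℝ p).map (evalₗ ℝ κ)

lemma mem_polynomialFunctionsLE {κ : Type*} {p : ℕ} {f : (κ → ℝ) → ℝ} :
    f ∈ polynomialFunctionsLE κ p ↔
      ∃ P : MvPolynomial κ ℝ, P.totalDegree ≤ p ∧ ∀ x, f x = eval x P := by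
  simp only [polynomialFunctionsLE, Submodule.mem_map, mem_restrictTotalDegree, funext_iff,
    evalₗ_apply, eq_comm]

/-- The restriction to the hyperplane `t = 1` of the monomial of exponent `s` in the homogeneous
coordinates `(x, t)`, as a function on `ℝ^κ`. -/
def dehomogenizedMonomial {κ : Type*} (s : Option κ →₀ ℕ) : (κ → ℝ) → ℝ :=
  s.prod fun o m => (fun x => homogeneousCoords (x, 1) o) ^ m

variable {κ : Type*}

lemma polynomialFunctionsLE_le_span [Finite κ] (p : ℕ) :
    polynomialFunctionsLE κ p ≤ Submodule.span ℝ (dehomogenizedMonomial '' {s | s.degree = p}) := by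
  have := Fintype.ofFinite κ
  intro f hf
  obtain ⟨P, hP, hfP⟩ := mem_polynomialFunctionsLE.1 hf
  have hf_eq : f = ∑ m ∈ P.support, coeff m P •
      dehomogenizedMonomial (Finsupp.optionElim (p - m.degree) m) := by
    ext x
    rw [hfP, eval_eq']
    simp [dehomogenizedMonomial, Finsupp.prod_fintype, homogeneousCoords]
  rw [hf_eq]
  refine Submodule.sum_smul_mem _ _ fun m hm => Submodule.subset_span ⟨_, ?_, rfl⟩
  have hm_le : m.degree ≤ p := (le_totalDegree hm).trans hP
  rw [Finsupp.degree_eq_sum] at hm_le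
  simp [Finsupp.degree_eq_sum, hm_le]

lemma finrank_polynomialFunctionsLE_le [Fintype κ] (p : ℕ) :
    Module.finrank ℝ (polynomialFunctionsLE κ p) ≤ (Fintype.card κ + p).choose p := by
  classical
  let S : Finset ((κ → ℝ) → ℝ) := (Finset.univ.finsuppAntidiag p).image dehomogenizedMonomial
  have hS : polynomialFunctionsLE κ p ≤ Submodule.span ℝ S := by
    convert polynomialFunctionsLE_le_span (κ := κ) p
    ext
    simp [S, Finsupp.degree_eq_sum]
  calc Module.finrank ℝ (polynomialFunctionsLE κ p)
      ≤ Module.finrank ℝ (Submodule.span ℝ (S : Set ((κ → ℝ) → ℝ))) := Submodule.finrank_mono hS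
    _ ≤ (Finset.univ.finsuppAntidiag p : Finset (Option κ →₀ ℕ)).card :=
        (finrank_span_finset_le_card S).trans Finset.card_image_le
    _ = (Fintype.card κ + p).choose p := by
        rw [Finset.card_finsuppAntidiag_nat_eq_choose, Finset.card_univ, Fintype.card_option,
          Nat.add_right_comm, Nat.add_sub_cancel]

end PolynomialFunctions

section RandomFeatures

open MvPolynomial

variable {κ : Type*} [Fintype κ]

/-- The feature `x ↦ Q(⟨w, x⟩ + b)` with activation `Q` and parameters `z = (w, b)`. -/
def feature (Q : Polynomial ℝ) (z : (κ → ℝ) × ℝ) : (κ → ℝ) → ℝ :=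
  fun x => Q.eval (∑ j, z.1 j * x j + z.2)

lemma feature_mem_polynomialFunctionsLE {Q : Polynomial ℝ} {p : ℕ} (hQ : Q.natDegree ≤ p)
    (z : (κ → ℝ) × ℝ) : feature Q z ∈ polynomialFunctionsLE κ p := by
  set L : MvPolynomial κ ℝ := ∑ j, z.1 j • X j + C z.2
  have hL_deg : L.totalDegree ≤ 1 := by
    refine (totalDegree_add _ _).trans (max_le (totalDegree_finsetSum_le fun j _ => ?_) ?_)
    · exact (totalDegree_smul_le _ _).trans (totalDegree_X j).le
    · simp
  refine mem_polynomialFunctionsLE.2 ⟨Polynomial.aeval L Q, ?_, fun x => ?_⟩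
  · calc (Polynomial.aeval L Q).totalDegree ≤ Q.natDegree * L.totalDegree :=
          totalDegree_polynomial_aeval_le Q L
      _ ≤ p * 1 := Nat.mul_le_mul hQ hL_deg
      _ = p := mul_one p
  · rw [eval_polynomial_aeval]
    simp [feature, L]

lemma exists_eval_homogeneousCoords_eq_apply_feature (Q : Polynomial ℝ)
    (ℓ : Module.Dual ℝ ((κ → ℝ) → ℝ)) :
    ∃ F : MvPolynomial (Option κ) ℝ,
      (∀ s, coeff s F = Q.coeff s.degree * (s.multinomial * ℓ (dehomogenizedMonomial s))) ∧
        ∀ z, eval (homogeneousCoords z) F = ℓ (feature Q z) := by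
  let y : Option κ → (κ → ℝ) → ℝ := fun o x => homogeneousCoords (x, 1) o
  obtain ⟨F, hF_coeff, hF_eval⟩ := exists_eval_eq_apply_eval ℓ
    (Polynomial.aeval (∑ o, y o • X o : MvPolynomial (Option κ) ((κ → ℝ) → ℝ)) Q)
  refine ⟨F, fun s => ?_, fun z => ?_⟩
  · rw [hF_coeff, coeff_aeval_sum_smul_X, map_smul, ← nsmul_eq_mul, map_nsmul, nsmul_eq_mul,
      smul_eq_mul]
    rfl
  · rw [hF_eval]
    congr 1
    ext x
    rw [eval_polynomial_aeval, Polynomial.aeval_fn_apply]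
    simp [feature, y, homogeneousCoords, Fintype.sum_option, add_comm, mul_comm]

lemma ae_apply_feature_ne_zero {μ : Measure ((κ → ℝ) × ℝ)}
    (hμ : AvoidsHypersurfaces (μ.map homogeneousCoords)) {p : ℕ} {Q : Polynomial ℝ}
    (hQ : Q.coeff p ≠ 0) {ℓ : Module.Dual ℝ ((κ → ℝ) → ℝ)}
    (hℓ : ¬ polynomialFunctionsLE κ p ≤ LinearMap.ker ℓ) : ∀ᵐ z ∂μ, ℓ (feature Q z) ≠ 0 := by
  obtain ⟨F, hF_coeff, hF_eval⟩ := exists_eval_homogeneousCoords_eq_apply_feature Q ℓ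
  have hF : F ≠ 0 := by
    rintro rfl
    refine hℓ ((polynomialFunctionsLE_le_span p).trans (Submodule.span_le.2 ?_))
    rintro _ ⟨s, rfl, rfl⟩
    have hs : s.multinomial ≠ 0 := (Nat.multinomial_pos _ _).ne'
    simpa [hQ, hs] using hF_coeff s
  filter_upwards [ae_of_ae_map measurable_homogeneousCoords.aemeasurable (hμ F hF)] with z hz
  rwa [← hF_eval]

lemma measurable_apply_feature (Q : Polynomial ℝ) (ℓ : Module.Dual ℝ ((κ → ℝ) → ℝ)) :
    Measurable fun z => ℓ (feature Q z) := by
  obtain ⟨F, -, hF_eval⟩ := exists_eval_homogeneousCoords_eq_apply_feature Q ℓ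
  simp only [← hF_eval]
  exact (continuous_eval F).measurable.comp measurable_homogeneousCoords

lemma ae_span_feature_eq_polynomialFunctionsLE {ι : Type*} [Fintype ι]
    (μ : ι → Measure ((κ → ℝ) × ℝ)) [∀ i, IsProbabilityMeasure (μ i)]
    (hμ : ∀ i, AvoidsHypersurfaces ((μ i).map homogeneousCoords)) {p : ℕ} {Q : Polynomial ℝ}
    (hQ_deg : Q.natDegree ≤ p) (hQ : Q.coeff p ≠ 0)
    (hcard : (Fintype.card κ + p).choose p ≤ Fintype.card ι) :
    ∀ᵐ ω ∂Measure.pi μ,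
      Submodule.span ℝ (Set.range fun i => feature Q (ω i)) = polynomialFunctionsLE κ p := by
  set V := polynomialFunctionsLE κ p with hV
  have : FiniteDimensional ℝ V := by rw [hV, polynomialFunctionsLE]; infer_instance
  let φ : (κ → ℝ) × ℝ → V := fun z => ⟨feature Q z, feature_mem_polynomialFunctionsLE hQ_deg z⟩
  have hφ : ∀ ℓ : Module.Dual ℝ V, Measurable fun z => ℓ (φ z) := by
    intro ℓ
    obtain ⟨ℓ', rfl⟩ := ℓ.exists_extend
    exact measurable_apply_feature Q ℓ'
  have hne : ∀ i, ∀ ℓ : Module.Dual ℝ V, ℓ ≠ 0 → ∀ᵐ z ∂μ i, ℓ (φ z) ≠ 0 := by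
    intro i ℓ hℓ
    obtain ⟨ℓ', rfl⟩ := ℓ.exists_extend
    exact ae_apply_feature_ne_zero (hμ i) hQ fun h => hℓ (LinearMap.ext fun f => h f.2)
  filter_upwards [ae_span_range_eq_top_pi μ hφ hne
    ((finrank_polynomialFunctionsLE_le p).trans hcard)] with ω hω
  have hmap := congrArg (Submodule.map V.subtype) hω
  rwa [Submodule.map_span, ← Set.range_comp, Submodule.map_subtype_top] at hmap

end RandomFeatures

theorem stmt2_general {ι κ : Type*} [Fintype ι] [Fintype κ] (μ : ι → Measure ((κ → ℝ) × ℝ))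
    [∀ i, IsProbabilityMeasure (μ i)]
    (hμ : ∀ i, AvoidsHypersurfaces ((μ i).map homogeneousCoords)) {p : ℕ} (σ : ℝ → ℝ)
    (cf : Fin (p + 1) → ℝ) (hcf : cf (Fin.last p) ≠ 0)
    (hσ : ∀ y, σ y = ∑ k : Fin (p + 1), cf k * y ^ (k : ℕ))
    (hcard : (Fintype.card κ + p).choose p ≤ Fintype.card ι) :
    ∀ᵐ ω ∂Measure.pi μ,
      (Submodule.span ℝ (Set.range fun i => fun x : κ → ℝ =>
          σ (∑ j, (ω i).1 j * x j + (ω i).2)) : Set ((κ → ℝ) → ℝ)) =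
        {f | ∃ P : MvPolynomial κ ℝ, P.totalDegree ≤ p ∧ ∀ x, f x = MvPolynomial.eval x P} := by
  set Q : Polynomial ℝ := Polynomial.ofFn (p + 1) cf
  have hQ_deg : Q.natDegree ≤ p := Nat.lt_succ_iff.1 (Polynomial.ofFn_natDegree_lt (by lia) cf)
  have hQ_coeff : Q.coeff p = cf (Fin.last p) :=
    Polynomial.ofFn_coeff_eq_val_of_lt cf p.lt_succ_self
  have hQ_eval : ∀ y, σ y = Q.eval y := by
    intro y
    rw [hσ, Polynomial.eval_eq_sum_range' (Nat.lt_succ_iff.2 hQ_deg), Finset.sum_range]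
    exact Finset.sum_congr rfl fun k _ => by rw [Polynomial.ofFn_coeff_eq_val_of_lt cf k.2]
  filter_upwards [ae_span_feature_eq_polynomialFunctionsLE μ hμ hQ_deg (hQ_coeff ▸ hcf) hcard]
    with ω hω
  simp only [hQ_eval]
  ext f
  rw [SetLike.mem_coe, Set.mem_ofPred_eq, ← mem_polynomialFunctionsLE, ← hω]
  rfl

/-- under Assumption A, in the small features regime with parameter ε > 0,
for every η > 0 there is N₀ such that for all N ≥ N₀, with probability at least 1 − η
the span of the N random features x ↦ σ(⟨wᵢ,x⟩ + bᵢ) equals Π_p(ℝ^d). -/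
theorem stmt2 (d p : ℕ) (hd : 1 ≤ d) (hp : 1 ≤ p)
    (σ : ℝ → ℝ) (cf : Fin (p + 1) → ℝ) (hcf : ∀ k, cf k ≠ 0)
    (hσ : ∀ y, σ y = ∑ k : Fin (p + 1), cf k * y ^ (k : ℕ))
    (ε : ℝ) (hε : 0 < ε) :
    ∀ η : ℝ, 0 < η → ∃ N₀ : ℕ, ∀ N : ℕ, N₀ ≤ N →
      ENNReal.ofReal (1 - η) ≤
        (Measure.pi fun _ : Fin N => featMeas d ε.toNNReal)
          {ω : Fin N → (Fin d → ℝ) × ℝ |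
            (Submodule.span ℝ (Set.range fun i : Fin N =>
                fun x : Fin d → ℝ => σ (∑ j, (ω i).1 j * x j + (ω i).2)) :
              Set ((Fin d → ℝ) → ℝ)) =
            {f : (Fin d → ℝ) → ℝ | ∃ P : MvPolynomial (Fin d) ℝ,
              P.totalDegree ≤ p ∧ ∀ x, f x = MvPolynomial.eval x P}} := by
  intro η hη
  refine ⟨(d + p).choose p, fun N hN => ?_⟩
  have hspan := stmt2_general (fun _ : Fin N => featMeas d ε.toNNReal)
    (fun _ => avoidsHypersurfaces_map_featMeas d (by simpa using hε)) σ cf (hcf _) hσ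
    (by simpa using hN)
  rw [measure_congr (Filter.eventuallyEq_univ.2 hspan), measure_univ]
  exact ENNReal.ofReal_le_one.2 (by linarith)
end

section
/- Fix an integer n ≥ 1, a polynomial σ : ℂ → ℂ, an integer d₀ ≥ 1, and j ∈ {0, …, n−1}^{d₀}, and assume σ^{(|j|)}(0) ≠ 0, where σ^{(m)} denotes the m-th complex derivative of σ. For each d ≥ d₀ let j^{(d)} ∈ {0, …, n−1}^d be j extended by zeros in coordinates d₀+1, …, d, and let w, b have the d-dependent complex Gaussian distribution described in the context. Then E_{w,b}[ |φ̂_{w,b}(j^{(d)})|² ] = Θ(d^{−|j|}) as d → ∞: there exist constants c₁ > 0, c₂ > 0 and d₁ ≥ d₀ such that c₁ d^{−|j|} ≤ E_{w,b}[ |φ̂_{w,b}(j^{(d)})|² ] ≤ c₂ d^{−|j|} for all d ≥ d₁. -/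
open MeasureTheory ProbabilityTheory Complex

/-- The `k`-th `n`-th root of unity `exp(2πik/n)`. -/
noncomputable def rootU (n : ℕ) (k : Fin n) : ℂ :=
  Complex.exp (2 * Real.pi * Complex.I * (k : ℕ) / n)

/-- The discrete Fourier coefficient
`φ̂_{w,b}(j) = (1/n^d) Σ_{x ∈ 𝕌_n^d} σ(⟨w,x⟩ + b) conj(χ_j(x))`, where
`⟨w,x⟩ = Σᵢ conj(wᵢ) xᵢ` and `χ_j(x) = x₁^{j₁} ⋯ x_d^{j_d}`; points of `𝕌_n^d` are
parametrized by `k : Fin d → Fin n` via `xᵢ = exp(2πik_i/n)`. -/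
noncomputable def phiHatC (n d : ℕ) (σ : ℂ → ℂ) (w : Fin d → ℂ) (b : ℂ)
    (j : Fin d → Fin n) : ℂ :=
  (1 / (n : ℂ) ^ d) * ∑ k : Fin d → Fin n,
    σ ((∑ i, (starRingEnd ℂ) (w i) * rootU n (k i)) + b) *
      (starRingEnd ℂ) (∏ i, rootU n (k i) ^ (j i : ℕ))

/-- Real/imaginary parts `(re, im)` assembled into a complex number. -/
noncomputable def toC (z : ℝ × ℝ) : ℂ := z.1 + z.2 * Complex.I

/-- The law of `(w, b)` where `w ∈ ℂ^d` has i.i.d. coordinates, each with independent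
`N(0, v)` real and imaginary parts, and `b ∈ ℂ` likewise, independent of `w`; complex
numbers are represented by pairs `(re, im)`. -/
noncomputable def cFeatMeas (d : ℕ) (v : NNReal) :
    Measure ((Fin d → ℝ × ℝ) × (ℝ × ℝ)) :=
  (Measure.pi fun _ : Fin d => (gaussianReal 0 v).prod (gaussianReal 0 v)).prod
    ((gaussianReal 0 v).prod (gaussianReal 0 v))

/-- The multi-index j ∈ {0,…,n−1}^{d₀} extended by zeros to dimension d. -/
def extIdx {n d₀ : ℕ} (hn : 1 ≤ n) (j : Fin d₀ → Fin n) (d : ℕ) : Fin d → Fin n :=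
  fun i => if h : (i : ℕ) < d₀ then j ⟨(i : ℕ), h⟩ else ⟨0, hn⟩

/-!
As a function of `(w, b)`, the coefficient `φ̂_{w,b}(J)` is a polynomial in the `d + 1` independent
complex Gaussians `b, w̄₁, …, w̄_d`. Averaging against `χ_J` over `𝕌_n^d` keeps exactly those
monomials of the expansion of `σ(⟨w,x⟩ + b)` whose exponents `k` in `w̄` satisfy `k ≡ J` modulo `n`.
Distinct monomials are orthogonal in `L²` by rotation invariance of the Gaussian, and the squared
norm of the `k`-th one is `k! (2v)^|k|`, so the second moment of `φ̂_{w,b}(J)` is an explicit finite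
sum of nonnegative terms. Now take `v = 1/d`. The exponent `J` itself contributes at least
`|a|² d^{-|J|}`, where `a ≠ 0` is the coefficient of degree `|J|` of `σ`. For the upper bound,
`k ≡ J` forces `J ≤ k`, so the degree `m` part has only `O(d^{m-|J|})` terms, each of size
`O(d^{-m})`.
-/

section Orthogonality

variable {Ω ι 𝕜 : Type*} [MeasurableSpace Ω] [RCLike 𝕜] {μ : Measure Ω}

theorem integral_norm_sq_sum_of_pairwise_orthogonal {s : Finset ι} {f : ι → Ω → 𝕜}
    (hf : ∀ i ∈ s, MemLp (f i) 2 μ)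
    (horth : (s : Set ι).Pairwise fun i j => ∫ ω, f i ω * (starRingEnd 𝕜) (f j ω) ∂μ = 0)
    (c : ι → 𝕜) :
    ∫ ω, ‖∑ i ∈ s, c i * f i ω‖ ^ 2 ∂μ = ∑ i ∈ s, ‖c i‖ ^ 2 * ∫ ω, ‖f i ω‖ ^ 2 ∂μ := by
  have hint : ∀ i ∈ s, ∀ j ∈ s, Integrable
      (fun ω => c i * (starRingEnd 𝕜) (c j) * (f i ω * (starRingEnd 𝕜) (f j ω))) μ :=
    fun i hi j hj => ((hf i hi).integrable_mul (hf j hj).star).const_mul _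
  have hexpand : ∀ ω, ((‖∑ i ∈ s, c i * f i ω‖ ^ 2 : ℝ) : 𝕜) =
      ∑ i ∈ s, ∑ j ∈ s, c i * (starRingEnd 𝕜) (c j) * (f i ω * (starRingEnd 𝕜) (f j ω)) := by
    intro ω
    rw [RCLike.ofReal_pow, ← RCLike.mul_conj, map_sum, Finset.sum_mul_sum]
    simp only [map_mul, mul_mul_mul_comm]
  apply RCLike.ofReal_injective (K := 𝕜)
  rw [← integral_ofReal]
  simp_rw [hexpand]
  rw [integral_finsetSum _ fun i hi => integrable_finsetSum _ (hint i hi), RCLike.ofReal_sum]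
  refine Finset.sum_congr rfl fun i hi => ?_
  rw [integral_finsetSum _ (hint i hi), Finset.sum_eq_single_of_mem i hi]
  · simp_rw [integral_const_mul, RCLike.mul_conj, ← RCLike.ofReal_pow]
    rw [integral_ofReal, ← RCLike.ofReal_mul]
  · intro j hj hji
    rw [integral_const_mul, horth hi hj hji.symm, mul_zero]

end Orthogonality

section ComplexGaussian

theorem measurePreserving_withDensity_comp {α β : Type*} [MeasurableSpace α] [MeasurableSpace β]
    {μ : Measure α} {ν : Measure β} {f : α → β} (hf : MeasurePreserving f μ ν)
    {ρ : β → ENNReal} (hρ : Measurable ρ) :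
    MeasurePreserving f (μ.withDensity fun a => ρ (f a)) (ν.withDensity ρ) := by
  refine ⟨hf.measurable, Measure.ext fun s hs => ?_⟩
  rw [Measure.map_apply hf.measurable hs, withDensity_apply _ (hf.measurable hs),
    withDensity_apply _ hs, hf.setLIntegral_comp_preimage hs hρ]

theorem measurePreserving_toC : MeasurePreserving toC := by
  have htoC : toC = Complex.measurableEquivRealProd.symm := by
    ext z
    rw [toC, Complex.measurableEquivRealProd_symm_apply, Complex.mk_eq_add_mul_I]
  exact htoC ▸ Complex.volume_preserving_equiv_real_prod.symm

/-- The law `𝒩_ℂ(0, v)` of a complex number whose real and imaginary parts are independent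
`N(0, v)` variables; note that its total variance is `2 * v`. -/
noncomputable def complexGaussian (v : NNReal) : Measure ℂ :=
  ((gaussianReal 0 v).prod (gaussianReal 0 v)).map toC

instance (v : NNReal) : IsProbabilityMeasure (complexGaussian v) :=
  Measure.isProbabilityMeasure_map measurePreserving_toC.measurable.aemeasurable

theorem measurePreserving_toC_complexGaussian (v : NNReal) :
    MeasurePreserving toC ((gaussianReal 0 v).prod (gaussianReal 0 v)) (complexGaussian v) :=
  ⟨measurePreserving_toC.measurable, rfl⟩

/-- The density of `complexGaussian v` with respect to Lebesgue measure on `ℂ`. -/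
noncomputable def complexGaussianPDFReal (v : NNReal) (z : ℂ) : ℝ :=
  (2 * Real.pi * v)⁻¹ * Real.exp (-(2 * (v : ℝ))⁻¹ * ‖z‖ ^ 2)

theorem complexGaussianPDFReal_nonneg (v : NNReal) (z : ℂ) : 0 ≤ complexGaussianPDFReal v z := by
  unfold complexGaussianPDFReal
  positivity

theorem measurable_complexGaussianPDFReal (v : NNReal) :
    Measurable (complexGaussianPDFReal v) := by
  unfold complexGaussianPDFReal
  fun_prop

theorem gaussianPDFReal_mul_gaussianPDFReal (v : NNReal) (z : ℝ × ℝ) :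
    gaussianPDFReal 0 v z.1 * gaussianPDFReal 0 v z.2 = complexGaussianPDFReal v (toC z) := by
  have hnorm : ‖toC z‖ ^ 2 = z.1 ^ 2 + z.2 ^ 2 := by
    rw [toC, ← Complex.normSq_eq_norm_sq, Complex.normSq_add_mul_I]
  have hexp : -(2 * (v : ℝ))⁻¹ * (z.1 ^ 2 + z.2 ^ 2) =
      -(z.1 - 0) ^ 2 / (2 * v) + -(z.2 - 0) ^ 2 / (2 * v) := by ring
  have hconst : (√(2 * Real.pi * v))⁻¹ * (√(2 * Real.pi * v))⁻¹ = (2 * Real.pi * v)⁻¹ := by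
    rw [← mul_inv, Real.mul_self_sqrt (by positivity)]
  rw [gaussianPDFReal, gaussianPDFReal, complexGaussianPDFReal, hnorm, hexp, Real.exp_add,
    ← hconst]
  ring

variable {v : NNReal}

theorem complexGaussian_of_var_ne_zero (hv : v ≠ 0) :
    complexGaussian v =
      volume.withDensity fun z => ENNReal.ofReal (complexGaussianPDFReal v z) := by
  have hprod : (gaussianReal 0 v).prod (gaussianReal 0 v) =
      volume.withDensity fun z => ENNReal.ofReal (complexGaussianPDFReal v (toC z)) := by
    rw [gaussianReal_of_var_ne_zero 0 hv,
      prod_withDensity (measurable_gaussianPDF 0 v) (measurable_gaussianPDF 0 v),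
      ← Measure.volume_eq_prod]
    simp only [gaussianPDF, ← ENNReal.ofReal_mul (gaussianPDFReal_nonneg _ _ _),
      gaussianPDFReal_mul_gaussianPDFReal]
  rw [complexGaussian, hprod]
  exact (measurePreserving_withDensity_comp measurePreserving_toC
    (measurable_complexGaussianPDFReal v).ennreal_ofReal).map_eq

theorem integral_complexGaussian {E : Type*} [NormedAddCommGroup E] [NormedSpace ℝ E]
    (hv : v ≠ 0) (f : ℂ → E) :
    ∫ z, f z ∂complexGaussian v = ∫ z, complexGaussianPDFReal v z • f z := by
  rw [complexGaussian_of_var_ne_zero hv, integral_withDensity_eq_integral_toReal_smul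
    (measurable_complexGaussianPDFReal v).ennreal_ofReal (by simp)]
  simp_rw [ENNReal.toReal_ofReal (complexGaussianPDFReal_nonneg v _)]

theorem measurePreserving_complexGaussian (hv : v ≠ 0) (e : ℂ ≃ₗᵢ[ℝ] ℂ) :
    MeasurePreserving e (complexGaussian v) (complexGaussian v) := by
  rw [complexGaussian_of_var_ne_zero hv]
  have hinv : ∀ z, complexGaussianPDFReal v (e z) = complexGaussianPDFReal v z := fun z => by
    rw [complexGaussianPDFReal, complexGaussianPDFReal, e.norm_map]
  simpa only [hinv] using measurePreserving_withDensity_comp e.measurePreserving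
    (measurable_complexGaussianPDFReal v).ennreal_ofReal

theorem integral_norm_pow_two_mul_complexGaussian (hv : v ≠ 0) (k : ℕ) :
    ∫ z, ‖z‖ ^ (2 * k) ∂complexGaussian v = k.factorial * (2 * (v : ℝ)) ^ k := by
  have : (0 : ℝ) < v := NNReal.coe_pos.2 (pos_iff_ne_zero.2 hv)
  have hradial := Complex.integral_rpow_mul_exp_neg_mul_rpow (p := 2) (q := (2 * k : ℕ))
    one_le_two (by linarith [(2 * k : ℕ).cast_nonneg (α := ℝ)])
    (show 0 < (2 * (v : ℝ))⁻¹ by positivity)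
  have hgamma : (((2 * k : ℕ) : ℝ) + 2) / 2 = k + 1 := by push_cast; ring
  have hrpow : ((2 * (v : ℝ))⁻¹) ^ (-(((2 * k : ℕ) : ℝ) + 2) / 2) = (2 * (v : ℝ)) ^ (k + 1) := by
    rw [neg_div, hgamma, Real.inv_rpow (by positivity), Real.rpow_neg (by positivity), inv_inv]
    exact_mod_cast Real.rpow_natCast (2 * (v : ℝ)) (k + 1)
  rw [hrpow, hgamma, Real.Gamma_nat_eq_factorial] at hradial
  simp only [Real.rpow_natCast, Real.rpow_two] at hradial
  calc ∫ z, ‖z‖ ^ (2 * k) ∂complexGaussian v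
      = (2 * Real.pi * v)⁻¹ * ∫ z : ℂ, ‖z‖ ^ (2 * k) * Real.exp (-(2 * (v : ℝ))⁻¹ * ‖z‖ ^ 2) := by
        rw [integral_complexGaussian hv, ← integral_const_mul]
        congr with z
        rw [complexGaussianPDFReal, smul_eq_mul]
        ring
    _ = k.factorial * (2 * (v : ℝ)) ^ k := by
        rw [hradial]
        field_simp
        exact pow_succ' _ _

theorem integrable_norm_pow_two_mul_complexGaussian (hv : v ≠ 0) (k : ℕ) :
    Integrable (fun z => ‖z‖ ^ (2 * k)) (complexGaussian v) := by
  refine .of_integral_ne_zero ?_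
  rw [integral_norm_pow_two_mul_complexGaussian hv]
  positivity

-- The rotation by the angle `π / (k - l)` preserves the measure and flips the sign of `zᵏ z̄ˡ`.
theorem integral_pow_mul_conj_pow_complexGaussian_of_ne (hv : v ≠ 0) {k l : ℕ} (hkl : k ≠ l) :
    ∫ z, z ^ k * (starRingEnd ℂ) z ^ l ∂complexGaussian v = 0 := by
  set u := Circle.exp (Real.pi / ((k : ℝ) - l))
  have hu : (u : ℂ) ^ k * (starRingEnd ℂ) (u : ℂ) ^ l = -1 := by
    have hne : (k : ℂ) - l ≠ 0 := sub_ne_zero.2 (Nat.cast_injective.ne hkl)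
    rw [Circle.coe_exp, ← Complex.exp_conj, ← Complex.exp_nat_mul, ← Complex.exp_nat_mul,
      ← Complex.exp_add, ← Complex.exp_pi_mul_I]
    congr 1
    rw [map_mul, Complex.conj_ofReal, Complex.conj_I]
    push_cast
    field_simp
    ring
  have hflip : ∀ z : ℂ, rotation u z ^ k * (starRingEnd ℂ) (rotation u z) ^ l =
      -(z ^ k * (starRingEnd ℂ) z ^ l) := fun z => by
    rw [rotation_apply, map_mul, mul_pow, mul_pow, mul_mul_mul_comm, hu, neg_one_mul]
  have hrot := (measurePreserving_complexGaussian hv (rotation u)).integral_comp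
    (rotation u).toHomeomorph.measurableEmbedding fun z => z ^ k * (starRingEnd ℂ) z ^ l
  simp_rw [hflip, integral_neg] at hrot
  exact self_eq_neg.1 hrot.symm

end ComplexGaussian

section Monomials

variable {ι : Type*} [Fintype ι] {v : NNReal}

theorem integral_norm_sq_monomial (hv : v ≠ 0) (k : ι → ℕ) :
    ∫ z : ι → ℂ, ‖∏ i, z i ^ k i‖ ^ 2 ∂Measure.pi (fun _ => complexGaussian v) =
      (∏ i, (k i).factorial) * (2 * (v : ℝ)) ^ ∑ i, k i := by
  simp_rw [norm_prod, norm_pow, ← Finset.prod_pow, ← pow_mul, mul_comm _ 2]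
  rw [integral_fintype_prod_eq_prod fun i (z : ℂ) => ‖z‖ ^ (2 * k i)]
  simp_rw [integral_norm_pow_two_mul_complexGaussian hv, Finset.prod_mul_distrib,
    Finset.prod_pow_eq_pow_sum, Nat.cast_prod]

theorem memLp_two_monomial (hv : v ≠ 0) (k : ι → ℕ) :
    MemLp (fun z : ι → ℂ => ∏ i, z i ^ k i) 2 (Measure.pi fun _ => complexGaussian v) := by
  rw [memLp_two_iff_integrable_sq_norm (Measurable.aestronglyMeasurable (by fun_prop))]
  simp_rw [norm_prod, norm_pow, ← Finset.prod_pow, ← pow_mul, mul_comm _ 2]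
  exact .fintype_prod fun i => integrable_norm_pow_two_mul_complexGaussian hv (k i)

theorem integral_monomial_mul_conj_monomial_of_ne (hv : v ≠ 0) {k l : ι → ℕ} (hkl : k ≠ l) :
    ∫ z : ι → ℂ, (∏ i, z i ^ k i) * (starRingEnd ℂ) (∏ i, z i ^ l i)
      ∂Measure.pi (fun _ => complexGaussian v) = 0 := by
  obtain ⟨i, hi⟩ := Function.ne_iff.1 hkl
  simp_rw [map_prod, map_pow, ← Finset.prod_mul_distrib]
  rw [integral_fintype_prod_eq_prod fun i (z : ℂ) => z ^ k i * (starRingEnd ℂ) z ^ l i]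
  exact Finset.prod_eq_zero (Finset.mem_univ i)
    (integral_pow_mul_conj_pow_complexGaussian_of_ne hv hi)

theorem integral_norm_sq_sum_monomial (hv : v ≠ 0) (s : Finset (ι → ℕ)) (c : (ι → ℕ) → ℂ) :
    ∫ z : ι → ℂ, ‖∑ k ∈ s, c k * ∏ i, z i ^ k i‖ ^ 2 ∂Measure.pi (fun _ => complexGaussian v) =
      ∑ k ∈ s, ‖c k‖ ^ 2 * ((∏ i, (k i).factorial) * (2 * (v : ℝ)) ^ ∑ i, k i) := by
  rw [integral_norm_sq_sum_of_pairwise_orthogonal (fun k _ => memLp_two_monomial hv k)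
    fun k _ l _ hkl => integral_monomial_mul_conj_monomial_of_ne hv hkl]
  simp_rw [integral_norm_sq_monomial hv]

end Monomials

section RootsOfUnity

variable {n : ℕ}

theorem rootU_eq_pow (k : Fin n) : rootU n k = Complex.exp (2 * Real.pi * I / n) ^ (k : ℕ) := by
  rw [rootU, ← Complex.exp_nat_mul]
  ring_nf

theorem inv_mul_sum_rootU_pow_mul_conj_pow [NeZero n] (a j : ℕ) :
    (n : ℂ)⁻¹ * ∑ k, rootU n k ^ a * (starRingEnd ℂ) (rootU n k ^ j) =
      if a ≡ j [MOD n] then 1 else 0 := by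
  set ζ := Complex.exp (2 * Real.pi * I / n)
  have hζ : IsPrimitiveRoot ζ n := Complex.isPrimitiveRoot_exp n (NeZero.ne n)
  set η := ζ ^ a * (starRingEnd ℂ) (ζ ^ j)
  have hη : η = ζ ^ a / ζ ^ j := by
    have hnorm : ‖ζ ^ j‖ = 1 := by rw [norm_pow, hζ.norm'_eq_one (NeZero.ne n), one_pow]
    rw [div_eq_mul_inv, Complex.inv_eq_conj hnorm]
  have hηn : η ^ n = 1 := by
    rw [hη, div_pow, pow_right_comm, hζ.pow_eq_one, pow_right_comm, hζ.pow_eq_one, one_pow,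
      one_pow, div_one]
  have hη1 : η = 1 ↔ a ≡ j [MOD n] := by
    rw [hη, div_eq_one_iff_eq (pow_ne_zero _ (hζ.ne_zero (NeZero.ne n))), hζ.eq_orderOf,
      (hζ.isOfFinOrder (NeZero.ne n)).pow_eq_pow_iff_modEq]
  have hsum : ∑ k, rootU n k ^ a * (starRingEnd ℂ) (rootU n k ^ j) =
      ∑ q ∈ Finset.range n, η ^ q := by
    rw [← Fin.sum_univ_eq_sum_range]
    refine Finset.sum_congr rfl fun k _ => ?_
    rw [rootU_eq_pow, mul_pow, ← map_pow, pow_right_comm, pow_right_comm _ j]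
  rw [hsum]
  split_ifs with h
  · simp [hη1.2 h, NeZero.ne n]
  · rw [geom_sum_eq (mt hη1.1 h), hηn, sub_self, zero_div, mul_zero]

theorem one_div_pow_mul_sum_prod_rootU_pow_mul_conj {d : ℕ} (a : Fin d → ℕ) (J : Fin d → Fin n) :
    1 / (n : ℂ) ^ d * ∑ k : Fin d → Fin n,
      (∏ i, rootU n (k i) ^ a i) * (starRingEnd ℂ) (∏ i, rootU n (k i) ^ (J i : ℕ)) =
      if ∀ i, a i ≡ J i [MOD n] then 1 else 0 := by
  have hfactor : ∀ i, (n : ℂ)⁻¹ * ∑ k, rootU n k ^ a i * (starRingEnd ℂ) (rootU n k ^ (J i : ℕ)) =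
      if a i ≡ J i [MOD n] then 1 else 0 := fun i =>
    have : NeZero n := ⟨(J i).pos.ne'⟩
    inv_mul_sum_rootU_pow_mul_conj_pow (a i) (J i)
  simp_rw [map_prod, ← Finset.prod_mul_distrib]
  rw [← Fintype.piFinset_univ, ← Finset.prod_univ_sum (fun _ => Finset.univ)
    fun i q => rootU n q ^ a i * (starRingEnd ℂ) (rootU n q ^ (J i : ℕ)), one_div, ← inv_pow,
    ← Fin.prod_const, ← Finset.prod_mul_distrib, Finset.prod_congr rfl fun i _ => hfactor i,
    Finset.prod_ite_zero, Finset.prod_const_one]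
  simp only [Finset.mem_univ, forall_true_left]

end RootsOfUnity

section Aliasing

variable {n d : ℕ}

/-- The variables in which `φ̂_{w,b}` is a polynomial: the bias `b`, in position `0`, followed by
the conjugates of the weights `w₁, …, w_d`. -/
def conjWeights (w : Fin d → ℂ) (b : ℂ) : Fin (d + 1) → ℂ :=
  Fin.cons b fun i => (starRingEnd ℂ) (w i)

theorem measurePreserving_conjWeights {v : NNReal} (hv : v ≠ 0) (d : ℕ) :
    MeasurePreserving
      (fun ω : (Fin d → ℝ × ℝ) × (ℝ × ℝ) => conjWeights (fun i => toC (ω.1 i)) (toC ω.2))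
      (cFeatMeas d v) (Measure.pi fun _ => complexGaussian v) := by
  have hconj : MeasurePreserving (fun z => (starRingEnd ℂ) (toC z))
      ((gaussianReal 0 v).prod (gaussianReal 0 v)) (complexGaussian v) :=
    (measurePreserving_complexGaussian hv Complex.conjLIE).comp
      (measurePreserving_toC_complexGaussian v)
  have hweights := measurePreserving_pi (fun _ : Fin d => _) _ fun _ => hconj
  have hprod := Measure.measurePreserving_swap.comp
    (hweights.prod (measurePreserving_toC_complexGaussian v))
  convert ((measurePreserving_piFinSuccAbove (fun _ : Fin (d + 1) => complexGaussian v)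
    0).symm).comp hprod using 1
  · ext ω i
    simp [conjWeights, MeasurableEquiv.piFinSuccAbove, Fin.insertNthEquiv]
  · rfl

/-- The multi-indices `k` of degree `m` in the variables of `conjWeights` whose monomial in
`(1, x)` restricts to `χ_J` on `𝕌_n^d`: the exponents of `w` are congruent to `J` modulo `n`,
that of `b` is free. -/
def aliasIdx (J : Fin d → Fin n) (m : ℕ) : Finset (Fin (d + 1) → ℕ) :=
  {k ∈ Finset.univ.piAntidiag m | ∀ i, k i.succ ≡ J i [MOD n]}

/-- The total multiplicity with which the multi-indices in `aliasIdx J m` occur in the expansion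
of `(⟨w,x⟩ + b) ^ m`. -/
def aliasWeight (J : Fin d → Fin n) (m : ℕ) : ℕ :=
  ∑ k ∈ aliasIdx J m, Nat.multinomial Finset.univ k

theorem mem_aliasIdx {J : Fin d → Fin n} {m : ℕ} {k : Fin (d + 1) → ℕ} :
    k ∈ aliasIdx J m ↔ ∑ i, k i = m ∧ ∀ i, k i.succ ≡ J i [MOD n] := by
  simp [aliasIdx]

theorem phiHatC_pow (w : Fin d → ℂ) (b : ℂ) (J : Fin d → Fin n) (m : ℕ) :
    phiHatC n d (· ^ m) w b J =
      ∑ k ∈ aliasIdx J m, Nat.multinomial Finset.univ k * ∏ i, conjWeights w b i ^ k i := by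
  have hexpand : ∀ q : Fin d → Fin n,
      ((∑ i, (starRingEnd ℂ) (w i) * rootU n (q i)) + b) ^ m =
        ∑ k ∈ Finset.univ.piAntidiag m, Nat.multinomial Finset.univ k *
          (∏ i, conjWeights w b i ^ k i) * ∏ i, rootU n (q i) ^ k i.succ := fun q => by
    have hsum : (∑ i, (starRingEnd ℂ) (w i) * rootU n (q i)) + b =
        ∑ i, conjWeights w b i * Fin.cons (α := fun _ => ℂ) 1 (fun i => rootU n (q i)) i := by
      simp [Fin.sum_univ_succ, conjWeights, add_comm]
    rw [hsum, Finset.sum_pow_eq_sum_piAntidiag]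
    refine Finset.sum_congr rfl fun k _ => ?_
    simp_rw [mul_pow, Finset.prod_mul_distrib, mul_assoc]
    congr 2
    simp [Fin.prod_univ_succ]
  simp_rw [phiHatC, hexpand, Finset.sum_mul, mul_assoc]
  rw [Finset.sum_comm, aliasIdx, Finset.sum_filter, Finset.mul_sum]
  refine Finset.sum_congr rfl fun k _ => ?_
  rw [← Finset.mul_sum, ← Finset.mul_sum, mul_left_comm, mul_left_comm (1 / (n : ℂ) ^ d),
    one_div_pow_mul_sum_prod_rootU_pow_mul_conj, mul_ite, mul_one, mul_zero, mul_ite, mul_zero]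

theorem phiHatC_eval (p : Polynomial ℂ) (w : Fin d → ℂ) (b : ℂ) (J : Fin d → Fin n) :
    phiHatC n d (fun z => p.eval z) w b J =
      ∑ m ∈ Finset.range (p.natDegree + 1), p.coeff m * phiHatC n d (· ^ m) w b J := by
  simp_rw [phiHatC, Polynomial.eval_eq_sum_range, Finset.sum_mul, Finset.mul_sum]
  rw [Finset.sum_comm]
  exact Finset.sum_congr rfl fun m _ => Finset.sum_congr rfl fun q _ => by ring

theorem pairwiseDisjoint_aliasIdx (J : Fin d → Fin n) (s : Set ℕ) :
    s.PairwiseDisjoint (aliasIdx J) :=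
  fun _ _ _ _ hne => Finset.disjoint_left.2 fun _ hk hk' =>
    hne ((mem_aliasIdx.1 hk).1.symm.trans (mem_aliasIdx.1 hk').1)

theorem phiHatC_eval_eq_sum_monomial (p : Polynomial ℂ) (w : Fin d → ℂ) (b : ℂ)
    (J : Fin d → Fin n) :
    phiHatC n d (fun z => p.eval z) w b J =
      ∑ k ∈ (Finset.range (p.natDegree + 1)).biUnion (aliasIdx J),
        p.coeff (∑ i, k i) * Nat.multinomial Finset.univ k * ∏ i, conjWeights w b i ^ k i := by
  rw [phiHatC_eval, Finset.sum_biUnion (pairwiseDisjoint_aliasIdx J _)]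
  refine Finset.sum_congr rfl fun m _ => ?_
  rw [phiHatC_pow, Finset.mul_sum]
  refine Finset.sum_congr rfl fun k hk => ?_
  rw [(mem_aliasIdx.1 hk).1, mul_assoc]

theorem integral_norm_sq_phiHatC {v : NNReal} (hv : v ≠ 0) (p : Polynomial ℂ)
    (J : Fin d → Fin n) :
    ∫ ω, ‖phiHatC n d (fun z => p.eval z) (fun i => toC (ω.1 i)) (toC ω.2) J‖ ^ 2
        ∂cFeatMeas d v =
      ∑ m ∈ Finset.range (p.natDegree + 1),
        ‖p.coeff m‖ ^ 2 * (m.factorial * (2 * (v : ℝ)) ^ m) * aliasWeight J m := by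
  have hT := measurePreserving_conjWeights hv d
  have hmonomial := integral_norm_sq_sum_monomial hv
    ((Finset.range (p.natDegree + 1)).biUnion (aliasIdx J))
    fun k => p.coeff (∑ i, k i) * Nat.multinomial Finset.univ k
  rw [← hT.map_eq, integral_map hT.aemeasurable (Measurable.aestronglyMeasurable (by fun_prop)),
    Finset.sum_biUnion (pairwiseDisjoint_aliasIdx J _)] at hmonomial
  simp_rw [phiHatC_eval_eq_sum_monomial]
  rw [hmonomial]
  refine Finset.sum_congr rfl fun m _ => ?_
  rw [aliasWeight, Nat.cast_sum, Finset.mul_sum]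
  refine Finset.sum_congr rfl fun k hk => ?_
  have hspec : ((∏ i, (k i).factorial : ℕ) : ℝ) * Nat.multinomial Finset.univ k = m.factorial := by
    rw [← (mem_aliasIdx.1 hk).1]
    exact_mod_cast Nat.multinomial_spec Finset.univ k
  rw [(mem_aliasIdx.1 hk).1, norm_mul, Complex.norm_natCast, ← hspec]
  push_cast
  ring

end Aliasing

section CardMultiIndex

variable {ι : Type*} [Fintype ι]

theorem card_piAntidiag_univ_le [DecidableEq ι] (m : ℕ) :
    (Finset.univ.piAntidiag m : Finset (ι → ℕ)).card ≤ Fintype.card ι ^ m := by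
  have hsum := Finset.sum_pow_eq_sum_piAntidiag Finset.univ (fun _ : ι => (1 : ℕ)) m
  simp only [one_pow, Finset.prod_const_one, mul_one, Finset.sum_const, smul_eq_mul, Nat.cast_id,
    Finset.card_univ] at hsum
  rw [hsum, Finset.card_eq_sum_ones]
  exact Finset.sum_le_sum fun k _ => Nat.multinomial_pos Finset.univ k

theorem card_mul_pow_sum_le {s : Finset (ι → ℕ)} {J : ι → ℕ} {m : ℕ}
    (hdeg : ∀ k ∈ s, ∑ i, k i = m) (hJ : ∀ k ∈ s, J ≤ k) :
    s.card * Fintype.card ι ^ ∑ i, J i ≤ Fintype.card ι ^ m := by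
  classical
  rcases s.eq_empty_or_nonempty with rfl | ⟨k₀, hk₀⟩
  · simp
  have hm : ∑ i, J i ≤ m := hdeg k₀ hk₀ ▸ Finset.sum_le_sum fun i _ => hJ k₀ hk₀ i
  have hshift : s.card ≤ (Finset.univ.piAntidiag (m - ∑ i, J i) : Finset (ι → ℕ)).card := by
    refine Finset.card_le_card_of_injOn (· - J) (fun k hk => ?_) fun k hk l hl hkl => ?_
    · simp [← hdeg k hk, Finset.sum_tsub_distrib _ fun i _ => hJ k hk i]
    · exact (tsub_left_inj (hJ k hk) (hJ l hl)).1 hkl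
  calc s.card * Fintype.card ι ^ ∑ i, J i
      ≤ Fintype.card ι ^ (m - ∑ i, J i) * Fintype.card ι ^ ∑ i, J i :=
        Nat.mul_le_mul_right _ (hshift.trans (card_piAntidiag_univ_le _))
    _ = Fintype.card ι ^ m := by rw [← pow_add, Nat.sub_add_cancel hm]

end CardMultiIndex

section AliasWeight

variable {n d : ℕ}

theorem one_le_aliasWeight_sum (J : Fin d → Fin n) : 1 ≤ aliasWeight J (∑ i, (J i : ℕ)) := by
  have hmem : Fin.cons (α := fun _ => ℕ) 0 (fun i => (J i : ℕ)) ∈ aliasIdx J (∑ i, (J i : ℕ)) := by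
    simp [mem_aliasIdx, Fin.sum_univ_succ, Nat.ModEq.refl]
  exact (Nat.multinomial_pos Finset.univ _).trans_le
    (Finset.single_le_sum (f := Nat.multinomial Finset.univ) (fun _ _ => Nat.zero_le _) hmem)

-- Since `J i < n`, an exponent congruent to `J i` modulo `n` is at least `J i`.
theorem cons_le_of_mem_aliasIdx {J : Fin d → Fin n} {m : ℕ} {k : Fin (d + 1) → ℕ}
    (hk : k ∈ aliasIdx J m) : Fin.cons (α := fun _ => ℕ) 0 (fun i => (J i : ℕ)) ≤ k := by
  refine Fin.cons_le.2 ⟨Nat.zero_le _, fun i => ?_⟩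
  dsimp only [Fin.tail]
  rw [← Nat.mod_eq_of_lt (J i).isLt, ← (mem_aliasIdx.1 hk).2 i]
  exact Nat.mod_le _ _

theorem aliasWeight_mul_pow_le (hd : d ≠ 0) (J : Fin d → Fin n) (m : ℕ) :
    aliasWeight J m * d ^ ∑ i, (J i : ℕ) ≤ m.factorial * (2 * d) ^ m := by
  have hweight : aliasWeight J m ≤ m.factorial * (aliasIdx J m).card := by
    rw [mul_comm]
    refine Finset.sum_le_card_nsmul _ _ _ fun k hk => ?_
    exact (mem_aliasIdx.1 hk).1 ▸ Nat.div_le_self _ _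
  have hcard := card_mul_pow_sum_le (fun _ hk => (mem_aliasIdx (J := J) (m := m).1 hk).1)
    fun _ hk => cons_le_of_mem_aliasIdx hk
  simp only [Fin.sum_univ_succ, Fin.cons_zero, Fin.cons_succ, zero_add, Fintype.card_fin] at hcard
  calc aliasWeight J m * d ^ ∑ i, (J i : ℕ)
      ≤ m.factorial * (aliasIdx J m).card * (d + 1) ^ ∑ i, (J i : ℕ) := by
        gcongr
        exact d.le_succ
    _ ≤ m.factorial * (d + 1) ^ m := by
        rw [mul_assoc]
        gcongr
    _ ≤ m.factorial * (2 * d) ^ m := by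
        gcongr
        omega

end AliasWeight

section Bounds

variable {n d : ℕ}

theorem le_integral_norm_sq_phiHatC (hd : d ≠ 0) (p : Polynomial ℂ) (J : Fin d → Fin n) :
    ‖p.coeff (∑ i, (J i : ℕ))‖ ^ 2 / (d : ℝ) ^ ∑ i, (J i : ℕ) ≤
      ∫ ω, ‖phiHatC n d (fun z => p.eval z) (fun i => toC (ω.1 i)) (toC ω.2) J‖ ^ 2
        ∂cFeatMeas d (d : NNReal)⁻¹ := by
  set T := ∑ i, (J i : ℕ)
  rcases lt_or_ge p.natDegree T with hdeg | hdeg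
  · rw [Polynomial.coeff_eq_zero_of_natDegree_lt hdeg, norm_zero, zero_pow two_ne_zero, zero_div]
    exact integral_nonneg fun ω => sq_nonneg _
  have hweight : (1 : ℝ) ≤ aliasWeight J T := by exact_mod_cast one_le_aliasWeight_sum J
  have hfactorial : (1 : ℝ) ≤ T.factorial := by exact_mod_cast T.factorial_pos
  have hpow : ((d : ℝ)⁻¹) ^ T ≤ (2 * (d : ℝ)⁻¹) ^ T := by
    gcongr
    exact le_mul_of_one_le_left (by positivity) one_le_two
  rw [integral_norm_sq_phiHatC (by positivity)]
  push_cast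
  calc ‖p.coeff T‖ ^ 2 / (d : ℝ) ^ T = ‖p.coeff T‖ ^ 2 * (1 * (d : ℝ)⁻¹ ^ T) * 1 := by
        rw [one_mul, mul_one, inv_pow, div_eq_mul_inv]
    _ ≤ ‖p.coeff T‖ ^ 2 * (T.factorial * (2 * (d : ℝ)⁻¹) ^ T) * aliasWeight J T := by gcongr
    _ ≤ _ := Finset.single_le_sum
        (f := fun m => ‖p.coeff m‖ ^ 2 * (m.factorial * (2 * (d : ℝ)⁻¹) ^ m) * aliasWeight J m)
        (fun m _ => by positivity) (Finset.mem_range_succ_iff.2 hdeg)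

theorem integral_norm_sq_phiHatC_le (hd : d ≠ 0) (p : Polynomial ℂ) (J : Fin d → Fin n) :
    ∫ ω, ‖phiHatC n d (fun z => p.eval z) (fun i => toC (ω.1 i)) (toC ω.2) J‖ ^ 2
        ∂cFeatMeas d (d : NNReal)⁻¹ ≤
      (∑ m ∈ Finset.range (p.natDegree + 1), ‖p.coeff m‖ ^ 2 * (m.factorial ^ 2 * 4 ^ m)) /
        (d : ℝ) ^ ∑ i, (J i : ℕ) := by
  rw [integral_norm_sq_phiHatC (by positivity), Finset.sum_div]
  refine Finset.sum_le_sum fun m _ => ?_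
  have hweight : (aliasWeight J m : ℝ) * d ^ ∑ i, (J i : ℕ) ≤ m.factorial * (2 * d) ^ m := by
    exact_mod_cast aliasWeight_mul_pow_le hd J m
  have : (0 : ℝ) < d := by positivity
  rw [le_div_iff₀ (by positivity)]
  push_cast
  calc _ = ‖p.coeff m‖ ^ 2 * (m.factorial * (2 * (d : ℝ)⁻¹) ^ m) *
          (aliasWeight J m * (d : ℝ) ^ ∑ i, (J i : ℕ)) := by rw [mul_assoc]
    _ ≤ ‖p.coeff m‖ ^ 2 * (m.factorial * (2 * (d : ℝ)⁻¹) ^ m) *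
          (m.factorial * (2 * d) ^ m) := by gcongr
    _ = ‖p.coeff m‖ ^ 2 * (m.factorial ^ 2 * 4 ^ m) := by
        have hpow : (2 * (d : ℝ)⁻¹) ^ m * (2 * d) ^ m = 4 ^ m := by
          rw [← mul_pow]
          congr 1
          field_simp
          norm_num
        rw [← hpow]
        ring

end Bounds

theorem sum_extIdx {n d₀ d : ℕ} (hn : 1 ≤ n) (j : Fin d₀ → Fin n) (hd : d₀ ≤ d) :
    ∑ i, (extIdx hn j d i : ℕ) = ∑ i, (j i : ℕ) := by
  obtain ⟨r, rfl⟩ := Nat.exists_eq_add_of_le hd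
  rw [Fin.sum_univ_add]
  simp [extIdx]

theorem stmt17_general (σp : Polynomial ℂ) (T : ℕ)
    (hσ : (Polynomial.derivative^[T] σp).eval 0 ≠ 0) :
    ∃ c₁ > (0 : ℝ), ∃ c₂ > (0 : ℝ), ∀ n d : ℕ, d ≠ 0 → ∀ J : Fin d → Fin n,
      ∑ i, (J i : ℕ) = T →
        c₁ / (d : ℝ) ^ T ≤
          (∫ ω : (Fin d → ℝ × ℝ) × (ℝ × ℝ),
            ‖phiHatC n d (fun z => σp.eval z) (fun i => toC (ω.1 i)) (toC ω.2) J‖ ^ 2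
            ∂(cFeatMeas d ((d : NNReal))⁻¹)) ∧
        (∫ ω : (Fin d → ℝ × ℝ) × (ℝ × ℝ),
            ‖phiHatC n d (fun z => σp.eval z) (fun i => toC (ω.1 i)) (toC ω.2) J‖ ^ 2
            ∂(cFeatMeas d ((d : NNReal))⁻¹)) ≤
          c₂ / (d : ℝ) ^ T := by
  have hcoeff : σp.coeff T ≠ 0 := fun h => hσ <| by
    rw [← Polynomial.coeff_zero_eq_eval_zero, Polynomial.coeff_iterate_derivative, zero_add, h,
      smul_zero]
  have hT : T ∈ Finset.range (σp.natDegree + 1) :=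
    Finset.mem_range_succ_iff.2 (Polynomial.le_natDegree_of_ne_zero hcoeff)
  refine ⟨‖σp.coeff T‖ ^ 2, by positivity,
    ∑ m ∈ Finset.range (σp.natDegree + 1), ‖σp.coeff m‖ ^ 2 * (m.factorial ^ 2 * 4 ^ m),
    Finset.sum_pos' (fun m _ => by positivity) ⟨T, hT, by positivity⟩, ?_⟩
  rintro n d hd J rfl
  exact ⟨le_integral_norm_sq_phiHatC hd σp J, integral_norm_sq_phiHatC_le hd σp J⟩

/-- for a polynomial σ : ℂ → ℂ with σ^{(|j|)}(0) ≠ 0 and fixed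
j ∈ {0,…,n−1}^{d₀}, extending j by zeros to dimension d and taking the d-dependent
complex Gaussian weights, one has E[|φ̂_{w,b}(j^{(d)})|²] = Θ(d^{−|j|}) as d → ∞. -/
theorem stmt17 (n d₀ : ℕ) (hn : 1 ≤ n) (hd₀ : 1 ≤ d₀) (σp : Polynomial ℂ)
    (j : Fin d₀ → Fin n)
    (hσ : (Polynomial.derivative^[∑ i, (j i : ℕ)] σp).eval 0 ≠ 0) :
    ∃ c₁ > (0 : ℝ), ∃ c₂ > (0 : ℝ), ∃ d₁ : ℕ, d₀ ≤ d₁ ∧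
      ∀ d : ℕ, d₁ ≤ d →
        c₁ / (d : ℝ) ^ (∑ i, (j i : ℕ)) ≤
          (∫ ω : (Fin d → ℝ × ℝ) × (ℝ × ℝ),
            ‖phiHatC n d (fun z => σp.eval z) (fun i => toC (ω.1 i)) (toC ω.2)
                (extIdx hn j d)‖ ^ 2
            ∂(cFeatMeas d ((d : NNReal))⁻¹)) ∧
        (∫ ω : (Fin d → ℝ × ℝ) × (ℝ × ℝ),
            ‖phiHatC n d (fun z => σp.eval z) (fun i => toC (ω.1 i)) (toC ω.2)
                (extIdx hn j d)‖ ^ 2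
            ∂(cFeatMeas d ((d : NNReal))⁻¹)) ≤
          c₂ / (d : ℝ) ^ (∑ i, (j i : ℕ)) := by
  obtain ⟨c₁, hc₁, c₂, hc₂, hbounds⟩ := stmt17_general σp (∑ i, (j i : ℕ)) hσ
  exact ⟨c₁, hc₁, c₂, hc₂, d₀, le_rfl, fun d hd =>
    hbounds n d (Nat.one_le_iff_ne_zero.1 (hd₀.trans hd)) _ (sum_extIdx hn j hd)⟩
end
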